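/- Let ρ be an exchangeable probability measure on S^∞ with directing random measure p̃. If, for some p ≥ 1, p̂_n ∈ [S]_p for all n ∈ ℕ and p̃ ∈ [S]_p with ρ-probability 1, then for every m ∈ ℕ, with ρ-probability 1, d^{(p)}_{[[S]_p]}( q_m(ξ^(n)), p̂_n^∞ ∘ ẽ_{n,m}^{−1} ) ≤ d^{(p)}_{[[S]_p]}( π(ξ^(n)), δ_{p̂_n} ). -/

import Mathlib

open MeasureTheory ProbabilityTheory
open scoped ENNReal

noncomputable section

/-- The `p`-Wasserstein-type distance associated with a cost function `c`. -/
noncomputable def wassW {X : Type*} [MeasurableSpace X] (c : X → X → ℝ) (p : ℝ)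
    (μ ν : Measure X) : ℝ :=
  sInf {r : ℝ | ∃ γ : Measure (X × X), γ.map Prod.fst = μ ∧ γ.map Prod.snd = ν ∧
    r = (∫ z, c z.1 z.2 ^ p ∂γ) ^ (1 / p)}

/-- Membership in `[S]_p`: a Borel probability measure with finite `p`-th moment. -/
def MemWp {S : Type*} [MeasurableSpace S] [MetricSpace S] (p : ℝ) (𝔭 : Measure S) : Prop :=
  IsProbabilityMeasure 𝔭 ∧ ∃ x₀ : S, Integrable (fun x => dist x x₀ ^ p) 𝔭

/-- The empirical measure `ẽ_{n,m}(ω) = (1/m) Σ_{i=1}^m δ_{ω_{i+n}}`. -/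
noncomputable def empShift {S : Type*} [MeasurableSpace S] (n m : ℕ) (ω : ℕ → S) :
    Measure S :=
  (m : ℝ≥0∞)⁻¹ • ∑ i ∈ Finset.range m, Measure.dirac (ω (i + n))


set_option linter.unusedSectionVars false

section Basics

variable {S : Type*} [MetricSpace S] [MeasurableSpace S]

/-- extended transport cost of a plan -/
def tcost (p : ℝ) (γ : Measure (S × S)) : ℝ≥0∞ := ∫⁻ z, edist z.1 z.2 ^ p ∂γ

/-- extended p-th moment -/
def tmom (p : ℝ) (x₀ : S) (μ : Measure S) : ℝ≥0∞ := ∫⁻ x, edist x x₀ ^ p ∂μ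

lemma wassW_nonneg {X : Type*} [MeasurableSpace X] (c : X → X → ℝ) (hc : ∀ x y, 0 ≤ c x y)
    (p : ℝ) (μ ν : Measure X) : 0 ≤ wassW c p μ ν := by
  apply Real.sInf_nonneg
  rintro r ⟨γ, -, -, rfl⟩
  exact Real.rpow_nonneg (integral_nonneg fun z => Real.rpow_nonneg (hc _ _) _) _

lemma wassW_le {X : Type*} [MeasurableSpace X] (c : X → X → ℝ) (hc : ∀ x y, 0 ≤ c x y)
    (p : ℝ) (μ ν : Measure X) (γ : Measure (X × X)) (h1 : γ.map Prod.fst = μ)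
    (h2 : γ.map Prod.snd = ν) : wassW c p μ ν ≤ (∫ z, c z.1 z.2 ^ p ∂γ) ^ (1 / p) := by
  apply csInf_le
  · refine ⟨0, ?_⟩
    rintro r ⟨γ, -, -, rfl⟩
    exact Real.rpow_nonneg (integral_nonneg fun z => Real.rpow_nonneg (hc _ _) _) _
  · exact ⟨γ, h1, h2, rfl⟩

lemma ofReal_integral_le {X : Type*} [MeasurableSpace X] (f : X → ℝ) (hf : ∀ x, 0 ≤ f x)
    (γ : Measure X) : ENNReal.ofReal (∫ z, f z ∂γ) ≤ ∫⁻ z, ENNReal.ofReal (f z) ∂γ := by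
  have h := enorm_integral_le_lintegral_enorm (μ := γ) f
  rw [Real.enorm_of_nonneg (integral_nonneg hf)] at h
  refine h.trans (le_of_eq ?_)
  apply lintegral_congr
  intro x
  rw [Real.enorm_of_nonneg (hf x)]

lemma edist_rpow (p : ℝ) (hp : 1 ≤ p) (x y : S) :
    edist x y ^ p = ENNReal.ofReal (dist x y ^ p) := by
  rw [edist_dist, ENNReal.ofReal_rpow_of_nonneg dist_nonneg (by linarith)]

lemma wassW_rpow_le_of_le (c : S → S → ℝ) (hc : ∀ x y, 0 ≤ c x y)
    (p : ℝ) (hp : 1 ≤ p) (μ ν : Measure S) (γ : Measure (S × S)) (h1 : γ.map Prod.fst = μ)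
    (h2 : γ.map Prod.snd = ν) : wassW c p μ ν ^ p ≤ ∫ z, c z.1 z.2 ^ p ∂γ := by
  have hp0 : (0 : ℝ) < p := by linarith
  have h := wassW_le c hc p μ ν γ h1 h2
  have h' := Real.rpow_le_rpow (wassW_nonneg c hc p μ ν) h hp0.le
  rwa [← Real.rpow_mul (integral_nonneg fun z => Real.rpow_nonneg (hc _ _) _),
    one_div_mul_cancel hp0.ne', Real.rpow_one] at h'

lemma wass_le_cost (p : ℝ) (hp : 1 ≤ p) (μ ν : Measure S) (γ : Measure (S × S))
    (h1 : γ.map Prod.fst = μ) (h2 : γ.map Prod.snd = ν) :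
    ENNReal.ofReal (wassW (fun u v => dist u v) p μ ν ^ p) ≤ tcost p γ := by
  refine (ENNReal.ofReal_le_ofReal
    (wassW_rpow_le_of_le (fun u v => dist u v) (fun _ _ => dist_nonneg) p hp μ ν γ h1 h2)).trans ?_
  refine (ofReal_integral_le _ (fun z => Real.rpow_nonneg dist_nonneg _) γ).trans (le_of_eq ?_)
  unfold tcost
  apply lintegral_congr
  intro z
  rw [edist_rpow p hp]

variable [TopologicalSpace.SeparableSpace S] [BorelSpace S]

lemma meas_edist2 (p : ℝ) : Measurable (fun z : S × S => edist z.1 z.2 ^ p) := by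
  have : SecondCountableTopology S := UniformSpace.secondCountable_of_separable S
  fun_prop

lemma meas_edist1 (p : ℝ) (x₀ : S) : Measurable (fun x : S => edist x x₀ ^ p) := by
  have : SecondCountableTopology S := UniformSpace.secondCountable_of_separable S
  fun_prop

lemma measurable_tcost (p : ℝ) : Measurable (tcost p : Measure (S × S) → ℝ≥0∞) :=
  Measure.measurable_lintegral (meas_edist2 p)

lemma measurable_tmom (p : ℝ) (x₀ : S) : Measurable (tmom p x₀ : Measure S → ℝ≥0∞) :=
  Measure.measurable_lintegral (meas_edist1 p x₀)

lemma ennreal_add_rpow (p : ℝ) (hp : 1 ≤ p) (a b : ℝ≥0∞) :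
    (a + b) ^ p ≤ 2 ^ (p - 1) * (a ^ p + b ^ p) := by
  exact ENNReal.rpow_add_le_mul_rpow_add_rpow a b hp

lemma edist_rpow_tri (p : ℝ) (hp : 1 ≤ p) (x y z : S) :
    edist x z ^ p ≤ 2 ^ (p - 1) * (edist x y ^ p + edist y z ^ p) :=
  (ENNReal.rpow_le_rpow (edist_triangle x y z) (by linarith)).trans (ennreal_add_rpow p hp _ _)

lemma two_rpow_ne_top (p : ℝ) (hp : 1 ≤ p) : (2 : ℝ≥0∞) ^ (p - 1) ≠ ∞ :=
  ENNReal.rpow_ne_top_of_nonneg (by linarith) (by simp)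

lemma tmom_lt_top_of (p : ℝ) (hp : 1 ≤ p) (x₀ x₁ : S) (μ : Measure S) [IsProbabilityMeasure μ]
    (h : tmom p x₀ μ < ∞) : tmom p x₁ μ < ∞ := by
  have : tmom p x₁ μ ≤ 2 ^ (p - 1) * (tmom p x₀ μ + edist x₀ x₁ ^ p) := by
    unfold tmom
    calc _ ≤ ∫⁻ x, 2 ^ (p - 1) * (edist x x₀ ^ p + edist x₀ x₁ ^ p) ∂μ :=
          lintegral_mono fun x => edist_rpow_tri p hp x x₀ x₁
      _ = _ := by
          rw [lintegral_const_mul _ ((meas_edist1 p x₀).add_const _),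
            lintegral_add_left (meas_edist1 p x₀)]
          simp
  refine this.trans_lt (ENNReal.mul_lt_top (two_rpow_ne_top p hp).lt_top
    (ENNReal.add_lt_top.2 ⟨h, ?_⟩))
  exact ENNReal.rpow_lt_top_of_nonneg (by linarith) (edist_ne_top _ _)

lemma integrable_iff_tmom (p : ℝ) (hp : 1 ≤ p) (x₀ : S) (μ : Measure S) :
    Integrable (fun x => dist x x₀ ^ p) μ ↔ tmom p x₀ μ < ∞ := by
  have : SecondCountableTopology S := UniformSpace.secondCountable_of_separable S
  have hm : AEStronglyMeasurable (fun x => dist x x₀ ^ p) μ := by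
    apply Measurable.aestronglyMeasurable
    fun_prop
  rw [Integrable, and_iff_right hm, hasFiniteIntegral_iff_ofReal
    (Filter.Eventually.of_forall fun x => Real.rpow_nonneg dist_nonneg _)]
  simp only [tmom, edist_rpow p hp]

lemma memWp_iff (p : ℝ) (hp : 1 ≤ p) (x₀ : S) (μ : Measure S) :
    MemWp p μ ↔ IsProbabilityMeasure μ ∧ tmom p x₀ μ < ∞ := by
  constructor
  · rintro ⟨h, x₁, h1⟩
    exact ⟨h, tmom_lt_top_of p hp x₁ x₀ μ ((integrable_iff_tmom p hp x₁ μ).1 h1)⟩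
  · rintro ⟨h, h1⟩
    exact ⟨h, x₀, (integrable_iff_tmom p hp x₀ μ).2 h1⟩

lemma measurableSet_isProb {X : Type*} [MeasurableSpace X] :
    MeasurableSet {μ : Measure X | IsProbabilityMeasure μ} := by
  have : {μ : Measure X | IsProbabilityMeasure μ} = {μ | μ Set.univ = 1} := by
    ext μ
    exact isProbabilityMeasure_iff
  rw [this]
  exact Measure.measurable_coe MeasurableSet.univ (measurableSet_singleton 1)

lemma measurableSet_memWp [Nonempty S] (p : ℝ) (hp : 1 ≤ p) :
    MeasurableSet {μ : Measure S | MemWp p μ} := by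
  obtain ⟨x₀⟩ := ‹Nonempty S›
  have : {μ : Measure S | MemWp p μ} = {μ | IsProbabilityMeasure μ} ∩ {μ | tmom p x₀ μ < ∞} := by
    ext μ
    exact memWp_iff p hp x₀ μ
  rw [this]
  exact measurableSet_isProb.inter (measurableSet_lt (measurable_tmom p x₀) measurable_const)

lemma tcost_le (p : ℝ) (hp : 1 ≤ p) (x₀ : S) (μ ν : Measure S) (γ : Measure (S × S))
    (h1 : γ.map Prod.fst = μ) (h2 : γ.map Prod.snd = ν) :
    tcost p γ ≤ 2 ^ (p - 1) * (tmom p x₀ μ + tmom p x₀ ν) := by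
  unfold tcost tmom
  have hm : Measurable (fun z : S × S => edist z.1 x₀ ^ p) :=
    (meas_edist1 p x₀).comp measurable_fst
  rw [← h1, ← h2, lintegral_map (meas_edist1 p x₀) measurable_fst,
    lintegral_map (meas_edist1 p x₀) measurable_snd,
    ← lintegral_add_left hm, ← lintegral_const_mul]
  · refine lintegral_mono fun z => ?_
    have := edist_rpow_tri p hp z.1 x₀ z.2
    rwa [edist_comm x₀ z.2] at this
  · exact ((meas_edist1 p x₀).comp measurable_fst).add ((meas_edist1 p x₀).comp measurable_snd)

lemma tmom_le (p : ℝ) (hp : 1 ≤ p) (x₀ : S) (μ ν : Measure S) (γ : Measure (S × S))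
    (h1 : γ.map Prod.fst = μ) (h2 : γ.map Prod.snd = ν) :
    tmom p x₀ μ ≤ 2 ^ (p - 1) * (tcost p γ + tmom p x₀ ν) := by
  unfold tcost tmom
  rw [← h1, ← h2, lintegral_map (meas_edist1 p x₀) measurable_fst,
    lintegral_map (meas_edist1 p x₀) measurable_snd,
    ← lintegral_add_left (meas_edist2 p), ← lintegral_const_mul]
  · refine lintegral_mono fun z => ?_
    exact edist_rpow_tri p hp z.1 z.2 x₀
  · exact (meas_edist2 p).add ((meas_edist1 p x₀).comp measurable_snd)

lemma integral_eq_tcost (p : ℝ) (hp : 1 ≤ p) (γ : Measure (S × S)) :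
    ∫ z, dist z.1 z.2 ^ p ∂γ = (tcost p γ).toReal := by
  have : SecondCountableTopology S := UniformSpace.secondCountable_of_separable S
  rw [integral_eq_lintegral_of_nonneg_ae
    (Filter.Eventually.of_forall fun x => Real.rpow_nonneg dist_nonneg _)
    (by apply Measurable.aestronglyMeasurable; fun_prop)]
  simp only [tcost, edist_rpow p hp]

/-- near-optimal plans exist -/
lemma exists_plan_lt (p : ℝ) (hp : 1 ≤ p) (μ ν : Measure S) (hμ : MemWp p μ) (hν : MemWp p ν)
    (t : ℝ≥0∞) (ht : ENNReal.ofReal (wassW (fun u v => dist u v) p μ ν ^ p) < t) :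
    ∃ γ : Measure (S × S), γ.map Prod.fst = μ ∧ γ.map Prod.snd = ν ∧ tcost p γ < t := by
  have hp0 : (0 : ℝ) < p := by linarith
  obtain ⟨hμp, x₀, -⟩ := id hμ
  obtain ⟨hνp, -⟩ := id hν
  have hμ' := ((memWp_iff p hp x₀ μ).1 hμ).2
  have hν' := ((memWp_iff p hp x₀ ν).1 hν).2
  by_contra! hcon
  have hfin : ∀ γ : Measure (S × S), γ.map Prod.fst = μ → γ.map Prod.snd = ν → tcost p γ < ∞ := by
    intro γ h1 h2
    exact (tcost_le p hp x₀ μ ν γ h1 h2).trans_lt (ENNReal.mul_lt_top (two_rpow_ne_top p hp).lt_top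
      (ENNReal.add_lt_top.2 ⟨hμ', hν'⟩))
  have hm1 : (μ.prod ν).map Prod.fst = μ := by simp
  have hm2 : (μ.prod ν).map Prod.snd = ν := by simp
  have htt : t < ∞ := (hcon _ hm1 hm2).trans_lt (hfin _ hm1 hm2)
  have key : t.toReal ^ (1 / p) ≤ wassW (fun u v => dist u v) p μ ν := by
    apply le_csInf
    · exact ⟨_, μ.prod ν, hm1, hm2, rfl⟩
    · rintro r ⟨γ, h1, h2, rfl⟩
      rw [integral_eq_tcost p hp]
      exact Real.rpow_le_rpow ENNReal.toReal_nonneg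
        (ENNReal.toReal_mono (hfin γ h1 h2).ne (hcon γ h1 h2)) (by positivity)
  have := Real.rpow_le_rpow (by positivity) key hp0.le
  rw [← Real.rpow_mul ENNReal.toReal_nonneg, one_div_mul_cancel hp0.ne', Real.rpow_one] at this
  have h3 := ENNReal.ofReal_le_ofReal this
  rw [ENNReal.ofReal_toReal htt.ne] at h3
  exact absurd ht (not_lt.2 h3)

end Basics


section Plan

variable {S : Type*} [MetricSpace S] [MeasurableSpace S]
variable {ι : Type*} [Fintype ι] [DecidableEq ι] [MeasurableSpace ι] [MeasurableSingletonClass ι]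

/-- the plan obtained by spreading a matrix of masses over the cells of `T` -/
def gplan (T : S → ι) (π : ι → ι → ℝ) (μ ν : Measure S) : Measure (S × S) :=
  ∑ i, ∑ j, ENNReal.ofReal (π i j / (μ.real (T ⁻¹' {i}) * ν.real (T ⁻¹' {j}))) •
    (μ.restrict (T ⁻¹' {i})).prod (ν.restrict (T ⁻¹' {j}))

lemma gplan_apply (T : S → ι) (π : ι → ι → ℝ) (μ ν : Measure S) (E : Set (S × S)) :
    gplan T π μ ν E = ∑ i, ∑ j,
      ENNReal.ofReal (π i j / (μ.real (T ⁻¹' {i}) * ν.real (T ⁻¹' {j}))) *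
      (μ.restrict (T ⁻¹' {i})).prod (ν.restrict (T ⁻¹' {j})) E := by
  simp [gplan, Measure.finsetSum_apply]

lemma sum_cells (T : S → ι) (hT : Measurable T) (μ : Measure S) (E : Set S) (hE : MeasurableSet E) :
    ∑ i, μ (E ∩ T ⁻¹' {i}) = μ E := by
  have h := measure_biUnion_finset (μ := μ) (s := (Finset.univ : Finset ι))
    (f := fun i => E ∩ T ⁻¹' {i}) ?_ ?_
  · rw [← h]
    congr 1
    ext x
    simp
  · intro i _ j _ hij
    refine Set.disjoint_left.2 fun x hx hx' => hij ?_
    have h1 : T x = i := hx.2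
    have h2 : T x = j := hx'.2
    rw [← h1, ← h2]
  · intro i _
    exact hE.inter (hT (measurableSet_singleton i))

lemma gplan_weight (π : ι → ι → ℝ) (hπ : ∀ i j, 0 ≤ π i j) (a b : ι → ℝ) (ha : ∀ i, 0 ≤ a i)
    (hb : ∀ j, 0 ≤ b j)
    (hr : ∀ i, ∑ j, π i j = a i) (hc : ∀ j, ∑ i, π i j = b j) (i : ι) (hi : a i ≠ 0) :
    ∑ j, ENNReal.ofReal (π i j / (a i * b j)) * ENNReal.ofReal (b j) = 1 := by
  have h0 : ∀ j, b j = 0 → π i j = 0 := by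
    intro j hj
    have h := hc j
    rw [hj, Finset.sum_eq_zero_iff_of_nonneg (fun i _ => hπ i j)] at h
    exact h i (Finset.mem_univ i)
  have h1 : ∀ j, ENNReal.ofReal (π i j / (a i * b j)) * ENNReal.ofReal (b j)
      = ENNReal.ofReal (π i j / a i) := by
    intro j
    rw [← ENNReal.ofReal_mul (div_nonneg (hπ i j) (mul_nonneg (ha i) (hb j)))]
    congr 1
    by_cases hj : b j = 0
    · rw [h0 j hj]; simp
    · field_simp
  simp_rw [h1]
  rw [← ENNReal.ofReal_sum_of_nonneg (fun j _ => div_nonneg (hπ i j) (ha i)), ← Finset.sum_div,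
    hr i, div_self hi, ENNReal.ofReal_one]

lemma gplan_fst (T : S → ι) (hT : Measurable T) (π : ι → ι → ℝ) (μ ν : Measure S)
    [IsProbabilityMeasure μ] [IsProbabilityMeasure ν] (hπ : ∀ i j, 0 ≤ π i j)
    (hr : ∀ i, ∑ j, π i j = μ.real (T ⁻¹' {i})) (hc : ∀ j, ∑ i, π i j = ν.real (T ⁻¹' {j})) :
    (gplan T π μ ν).map Prod.fst = μ := by
  ext E hE
  rw [Measure.map_apply measurable_fst hE, gplan_apply, ← sum_cells T hT μ E hE]
  refine Finset.sum_congr rfl fun i _ => ?_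
  have hpre : (Prod.fst ⁻¹' E : Set (S × S)) = E ×ˢ Set.univ := by ext; simp
  simp_rw [hpre, Measure.prod_prod, Measure.restrict_apply hE, Measure.restrict_apply_univ]
  by_cases hi : μ.real (T ⁻¹' {i}) = 0
  · have : μ (E ∩ T ⁻¹' {i}) = 0 := by
      refine measure_mono_null Set.inter_subset_right ?_
      rwa [measureReal_eq_zero_iff] at hi
    simp [this]
  · have h := gplan_weight π hπ _ _ (fun i => measureReal_nonneg) (fun j => measureReal_nonneg)
      hr hc i hi
    have e : ∀ j, ENNReal.ofReal (ν.real (T ⁻¹' {j})) = ν (T ⁻¹' {j}) :=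
      fun j => ofReal_measureReal
    simp only [e] at h
    calc _ = ∑ j, μ (E ∩ T ⁻¹' {i}) *
        (ENNReal.ofReal (π i j / (μ.real (T ⁻¹' {i}) * ν.real (T ⁻¹' {j}))) * ν (T ⁻¹' {j})) := by
          refine Finset.sum_congr rfl fun j _ => ?_
          ring
      _ = _ := by rw [← Finset.mul_sum, h, mul_one]

lemma gplan_snd (T : S → ι) (hT : Measurable T) (π : ι → ι → ℝ) (μ ν : Measure S)
    [IsProbabilityMeasure μ] [IsProbabilityMeasure ν] (hπ : ∀ i j, 0 ≤ π i j)
    (hr : ∀ i, ∑ j, π i j = μ.real (T ⁻¹' {i})) (hc : ∀ j, ∑ i, π i j = ν.real (T ⁻¹' {j})) :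
    (gplan T π μ ν).map Prod.snd = ν := by
  ext E hE
  rw [Measure.map_apply measurable_snd hE, gplan_apply, ← sum_cells T hT ν E hE, Finset.sum_comm]
  refine Finset.sum_congr rfl fun i _ => ?_
  have hpre : (Prod.snd ⁻¹' E : Set (S × S)) = Set.univ ×ˢ E := by ext; simp
  simp_rw [hpre, Measure.prod_prod, Measure.restrict_apply hE, Measure.restrict_apply_univ]
  by_cases hi : ν.real (T ⁻¹' {i}) = 0
  · have : ν (E ∩ T ⁻¹' {i}) = 0 := by
      refine measure_mono_null Set.inter_subset_right ?_
      rwa [measureReal_eq_zero_iff] at hi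
    simp [this]
  · have h := gplan_weight (fun i j => π j i) (fun i j => hπ j i) _ _
      (fun i => measureReal_nonneg) (fun j => measureReal_nonneg) hc hr i hi
    have e : ∀ j, ENNReal.ofReal (μ.real (T ⁻¹' {j})) = μ (T ⁻¹' {j}) :=
      fun j => ofReal_measureReal
    simp only [e] at h
    calc _ = ∑ j, ν (E ∩ T ⁻¹' {i}) *
        (ENNReal.ofReal (π j i / (ν.real (T ⁻¹' {i}) * μ.real (T ⁻¹' {j}))) * μ (T ⁻¹' {j})) := by
          refine Finset.sum_congr rfl fun j _ => ?_
          rw [mul_comm (ν.real _)]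
          ring
      _ = _ := by rw [← Finset.mul_sum, h, mul_one]

lemma gplan_cell (T : S → ι) (hT : Measurable T) (π : ι → ι → ℝ) (μ ν : Measure S)
    [IsProbabilityMeasure μ] [IsProbabilityMeasure ν] (i j : ι) :
    gplan T π μ ν ((T ⁻¹' {i}) ×ˢ (T ⁻¹' {j})) ≤ ENNReal.ofReal (π i j) := by
  rw [gplan_apply]
  have hm : ∀ i, MeasurableSet (T ⁻¹' {i}) := fun i => hT (measurableSet_singleton i)
  have hd : ∀ i k, k ≠ i → T ⁻¹' {i} ∩ T ⁻¹' {k} = ∅ := by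
    intro i k hk
    ext x
    simp only [Set.mem_inter_iff, Set.mem_preimage, Set.mem_singleton_iff, Set.mem_empty_iff_false,
      iff_false, not_and]
    rintro rfl h
    exact hk h.symm
  simp_rw [Measure.prod_prod, Measure.restrict_apply (hm _)]
  rw [Finset.sum_eq_single i, Finset.sum_eq_single j]
  · rw [Set.inter_self, Set.inter_self, ← ofReal_measureReal (μ := μ),
      ← ofReal_measureReal (μ := ν), ← ENNReal.ofReal_mul measureReal_nonneg]
    by_cases h0 : μ.real (T ⁻¹' {i}) * ν.real (T ⁻¹' {j}) = 0
    · rw [h0]; simp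
    · rw [← ENNReal.ofReal_mul' (by positivity), div_mul_cancel₀ _ h0]
  · intro k _ hk
    rw [hd j k hk]; simp
  · simp
  · intro k _ hk
    rw [hd i k hk]; simp
  · simp

lemma lintegral_cells (T : S → ι) (hT : Measurable T) (γ : Measure (S × S)) (f : ι → ι → ℝ≥0∞) :
    ∫⁻ z, f (T z.1) (T z.2) ∂γ = ∑ i, ∑ j, f i j * γ ((T ⁻¹' {i}) ×ˢ (T ⁻¹' {j})) := by
  have hm : Measurable (fun z : S × S => (T z.1, T z.2)) :=
    (hT.comp measurable_fst).prodMk (hT.comp measurable_snd)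
  have h1 := lintegral_map (μ := γ) (f := fun q : ι × ι => f q.1 q.2) (measurable_of_finite _) hm
  simp only at h1
  rw [← h1, lintegral_fintype, Fintype.sum_prod_type]
  refine Finset.sum_congr rfl fun i _ => Finset.sum_congr rfl fun j _ => ?_
  rw [Measure.map_apply hm (measurableSet_singleton _)]
  congr 2
  ext z
  simp [Prod.ext_iff]

lemma measurable_gplan (T : S → ι) (hT : Measurable T) (π : Measure S → ι → ι → ℝ)
    (hπ : ∀ i j, Measurable fun μ => π μ i j) (ν : Measure S) [IsProbabilityMeasure ν] :
    Measurable fun μ => gplan T (π μ) μ ν := by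
  refine Measure.measurable_of_measurable_coe _ fun E hE => ?_
  simp_rw [gplan_apply]
  have hm : ∀ i, MeasurableSet (T ⁻¹' {i}) := fun i => hT (measurableSet_singleton i)
  refine Finset.measurable_sum _ fun i _ => Finset.measurable_sum _ fun j _ => ?_
  refine Measurable.mul ?_ ?_
  · refine ENNReal.measurable_ofReal.comp ((hπ i j).div (Measurable.mul_const ?_ _))
    exact (Measure.measurable_coe (hm i)).ennreal_toReal
  · simp_rw [Measure.prod_apply hE, ← lintegral_indicator (hm i)]
    exact Measure.measurable_lintegral ((measurable_measure_prodMk_left hE).indicator (hm i))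

/-- complete a matrix to one with prescribed marginals -/
def fixM (M : ι → ι → ℝ) (a b : ι → ℝ) (i j : ι) : ℝ :=
  M i j + (a i - ∑ k, M i k) * (b j - ∑ k, M k j) / (1 - ∑ k, ∑ l, M k l)

lemma fixM_row (M : ι → ι → ℝ) (a b : ι → ℝ) (hb : ∑ j, b j = 1) (hM : ∑ k, ∑ l, M k l < 1)
    (i : ι) : ∑ j, fixM M a b i j = a i := by
  have h : 1 - ∑ k, ∑ l, M k l ≠ 0 := by linarith
  unfold fixM
  rw [Finset.sum_add_distrib, ← Finset.sum_div, ← Finset.mul_sum, Finset.sum_sub_distrib, hb,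
    Finset.sum_comm (f := fun j k => M k j), mul_div_cancel_right₀ _ h]
  ring

lemma fixM_col (M : ι → ι → ℝ) (a b : ι → ℝ) (ha : ∑ j, a j = 1) (hM : ∑ k, ∑ l, M k l < 1)
    (j : ι) : ∑ i, fixM M a b i j = b j := by
  have h : 1 - ∑ k, ∑ l, M k l ≠ 0 := by linarith
  unfold fixM
  rw [Finset.sum_add_distrib, ← Finset.sum_div, ← Finset.sum_mul, Finset.sum_sub_distrib, ha,
    mul_div_cancel_left₀ _ h]
  ring

lemma sum_real_cells (T : S → ι) (hT : Measurable T) (μ : Measure S) [IsProbabilityMeasure μ] :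
    ∑ i, μ.real (T ⁻¹' {i}) = 1 := by
  have h := sum_cells T hT μ Set.univ MeasurableSet.univ
  simp only [Set.univ_inter, measure_univ] at h
  have h2 := congrArg ENNReal.toReal h
  rwa [ENNReal.toReal_sum (fun i _ => measure_ne_top _ _), ENNReal.toReal_one] at h2

open Classical in
/-- candidate plans -/
def cand (T : S → ι) (M : ι → ι → ℚ) (ν μ : Measure S) : Measure (S × S) :=
  if (∑ k, ∑ l, (M k l : ℝ) < 1 ∧
    ∀ i j, 0 ≤ fixM (fun i j => (M i j : ℝ)) (fun i => μ.real (T ⁻¹' {i}))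
      (fun j => ν.real (T ⁻¹' {j})) i j)
  then gplan T (fixM (fun i j => (M i j : ℝ)) (fun i => μ.real (T ⁻¹' {i}))
      (fun j => ν.real (T ⁻¹' {j}))) μ ν
  else μ.prod ν

lemma cand_marg (T : S → ι) (hT : Measurable T) (M : ι → ι → ℚ) (ν μ : Measure S)
    [IsProbabilityMeasure μ] [IsProbabilityMeasure ν] :
    (cand T M ν μ).map Prod.fst = μ ∧ (cand T M ν μ).map Prod.snd = ν := by
  unfold cand
  split_ifs with h
  · exact ⟨gplan_fst T hT _ μ ν h.2 (fixM_row _ _ _ (sum_real_cells T hT ν) h.1)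
      (fixM_col _ _ _ (sum_real_cells T hT μ) h.1),
      gplan_snd T hT _ μ ν h.2 (fixM_row _ _ _ (sum_real_cells T hT ν) h.1)
      (fixM_col _ _ _ (sum_real_cells T hT μ) h.1)⟩
  · constructor <;> simp

lemma measurable_cand (T : S → ι) (hT : Measurable T) (M : ι → ι → ℚ) (ν : Measure S)
    [IsProbabilityMeasure ν] : Measurable (cand T M ν) := by
  have hm : ∀ i, MeasurableSet (T ⁻¹' {i}) := fun i => hT (measurableSet_singleton i)
  have hF : ∀ i j, Measurable fun μ : Measure S =>
      fixM (fun i j => (M i j : ℝ)) (fun i => μ.real (T ⁻¹' {i}))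
      (fun j => ν.real (T ⁻¹' {j})) i j := by
    intro i j
    unfold fixM
    have : Measurable fun μ : Measure S => μ.real (T ⁻¹' {i}) :=
      (Measure.measurable_coe (hm i)).ennreal_toReal
    fun_prop
  unfold cand
  refine Measurable.ite ?_ (measurable_gplan T hT _ hF ν) ?_
  · have hV := MeasurableSet.iInter fun i => MeasurableSet.iInter fun j =>
      measurableSet_le (measurable_const (a := (0 : ℝ))) (hF i j)
    refine ((MeasurableSet.const (∑ k, ∑ l, (M k l : ℝ) < 1)).inter hV).congr ?_
    ext μ
    simp
  · refine Measure.measurable_of_measurable_coe _ fun E hE => ?_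
    simp_rw [Measure.prod_apply hE]
    exact Measure.measurable_lintegral (measurable_measure_prodMk_left hE)

end Plan


section Approx

lemma exists_rat_matrix {ι : Type*} [Fintype ι] (G : ι → ι → ℝ) (hG : ∀ i j, 0 ≤ G i j)
    (hs : ∑ i, ∑ j, G i j = 1) (η : ℝ) (hη : 0 < η) :
    ∃ M : ι → ι → ℚ, (∀ i j, (0 : ℝ) ≤ M i j) ∧ (∀ i j, (M i j : ℝ) ≤ G i j) ∧
      ∑ i, ∑ j, (M i j : ℝ) < 1 ∧ 1 - ∑ i, ∑ j, (M i j : ℝ) ≤ η := by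
  set K : ℝ := (Fintype.card ι : ℝ) * Fintype.card ι with hK
  have hK0 : 0 ≤ K := by positivity
  set δ := η / (K + 1) with hδ
  have hδ0 : 0 < δ := by positivity
  have hq : ∀ i j, ∃ q : ℚ, (0 : ℝ) ≤ q ∧ (q : ℝ) ≤ G i j ∧ (0 < G i j → (q : ℝ) < G i j) ∧
      G i j - δ ≤ q := by
    intro i j
    rcases (hG i j).eq_or_lt with h | h
    · refine ⟨0, by simp, by simp [← h], fun h' => absurd h' (by simp [← h]), ?_⟩
      rw [← h]; simp [hδ0.le]
    · obtain ⟨q, hq1, hq2⟩ := exists_rat_btwn (show max 0 (G i j - δ) < G i j from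
        max_lt h (by linarith))
      exact ⟨q, (le_max_left _ _).trans hq1.le, hq2.le, fun _ => hq2,
        (le_max_right _ _).trans hq1.le⟩
  choose M h0 h1 h2 h3 using hq
  refine ⟨M, h0, h1, ?_, ?_⟩
  · rw [← hs]
    have hex : ∃ i j, 0 < G i j := by
      by_contra! hcon
      have : ∑ i, ∑ j, G i j ≤ 0 :=
        Finset.sum_nonpos fun i _ => Finset.sum_nonpos fun j _ => hcon i j
      linarith
    obtain ⟨i, j, hij⟩ := hex
    refine Finset.sum_lt_sum (fun k _ => Finset.sum_le_sum fun l _ => h1 k l)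
      ⟨i, Finset.mem_univ _, Finset.sum_lt_sum (fun l _ => h1 i l) ⟨j, Finset.mem_univ _, h2 i j hij⟩⟩
  · rw [← hs, ← Finset.sum_sub_distrib]
    simp_rw [← Finset.sum_sub_distrib]
    calc ∑ i, ∑ j, (G i j - (M i j : ℝ)) ≤ ∑ _i : ι, ∑ _j : ι, δ :=
          Finset.sum_le_sum fun i _ => Finset.sum_le_sum fun j _ => by linarith [h3 i j]
      _ = K * δ := by simp [hK]; ring
      _ ≤ η := by
          rw [hδ, mul_div_assoc', div_le_iff₀ (by positivity)]
          nlinarith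

variable {S : Type*} [MetricSpace S] [MeasurableSpace S]
variable [TopologicalSpace.SeparableSpace S] [BorelSpace S]
variable {ι : Type*} [Fintype ι] [DecidableEq ι] [MeasurableSpace ι] [MeasurableSingletonClass ι]

/-- discretization error -/
def derr (p : ℝ) (T : S → ι) (e : ι → S) (μ : Measure S) : ℝ≥0∞ :=
  (∫⁻ x, edist x (e (T x)) ^ p ∂μ) ^ (1 / p)

lemma mink3 {X : Type*} [MeasurableSpace X] (p : ℝ) (hp : 1 ≤ p) (γ : Measure X)
    (f g h k : X → ℝ≥0∞) (hf : Measurable f) (hg : Measurable g) (hh : Measurable h)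
    (hk : ∀ x, k x ≤ f x + g x + h x) :
    (∫⁻ x, k x ^ p ∂γ) ^ (1 / p) ≤ (∫⁻ x, f x ^ p ∂γ) ^ (1 / p) + (∫⁻ x, g x ^ p ∂γ) ^ (1 / p)
      + (∫⁻ x, h x ^ p ∂γ) ^ (1 / p) := by
  have hp0 : (0 : ℝ) < p := by linarith
  calc _ ≤ (∫⁻ x, ((f + g) + h) x ^ p ∂γ) ^ (1 / p) := by
        refine ENNReal.rpow_le_rpow (lintegral_mono fun x => ?_) (by positivity)
        exact ENNReal.rpow_le_rpow (hk x) hp0.le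
    _ ≤ (∫⁻ x, (f + g) x ^ p ∂γ) ^ (1 / p) + (∫⁻ x, h x ^ p ∂γ) ^ (1 / p) :=
        ENNReal.lintegral_Lp_add_le (hf.add hg).aemeasurable hh.aemeasurable hp
    _ ≤ _ := by
        gcongr
        exact ENNReal.lintegral_Lp_add_le hf.aemeasurable hg.aemeasurable hp

lemma derr_tri (p : ℝ) (hp : 1 ≤ p) (T : S → ι) (hT : Measurable T) (e : ι → S)
    (μ ν : Measure S) (γ : Measure (S × S)) (h1 : γ.map Prod.fst = μ) (h2 : γ.map Prod.snd = ν) :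
    tcost p γ ^ (1 / p) ≤ derr p T e μ +
      (∫⁻ z, edist (e (T z.1)) (e (T z.2)) ^ p ∂γ) ^ (1 / p) + derr p T e ν ∧
    (∫⁻ z, edist (e (T z.1)) (e (T z.2)) ^ p ∂γ) ^ (1 / p) ≤
      derr p T e μ + tcost p γ ^ (1 / p) + derr p T e ν := by
  have : SecondCountableTopology S := UniformSpace.secondCountable_of_separable S
  have hτ : Measurable fun x => e (T x) := (measurable_of_finite e).comp hT
  have hd : Measurable fun x => edist x (e (T x)) := measurable_id.edist hτ
  have hd1 : Measurable fun z : S × S => edist z.1 (e (T z.1)) := hd.comp measurable_fst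
  have hd2 : Measurable fun z : S × S => edist z.2 (e (T z.2)) := hd.comp measurable_snd
  have hdd : Measurable fun z : S × S => edist (e (T z.1)) (e (T z.2)) :=
    (hτ.comp measurable_fst).edist (hτ.comp measurable_snd)
  have e1 : derr p T e μ = (∫⁻ z, edist z.1 (e (T z.1)) ^ p ∂γ) ^ (1 / p) := by
    unfold derr
    rw [← h1, lintegral_map (hd.pow_const p) measurable_fst]
  have e2 : derr p T e ν = (∫⁻ z, edist z.2 (e (T z.2)) ^ p ∂γ) ^ (1 / p) := by
    unfold derr
    rw [← h2, lintegral_map (hd.pow_const p) measurable_snd]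
  rw [e1, e2]
  unfold tcost
  constructor
  · refine mink3 p hp γ _ _ _ _ hd1 hdd hd2 fun z => ?_
    have := edist_triangle4 z.1 (e (T z.1)) (e (T z.2)) z.2
    rwa [edist_comm (e (T z.2)) z.2] at this
  · refine mink3 p hp γ _ _ _ _ hd1 (by fun_prop) hd2 fun z => ?_
    have := edist_triangle4 (e (T z.1)) z.1 z.2 (e (T z.2))
    rwa [edist_comm (e (T z.1)) z.1] at this

lemma cand_approx (p : ℝ) (hp : 1 ≤ p) (T : S → ι) (hT : Measurable T) (e : ι → S)
    (μ ν : Measure S) [IsProbabilityMeasure μ] [IsProbabilityMeasure ν]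
    (γ : Measure (S × S)) (h1 : γ.map Prod.fst = μ) (h2 : γ.map Prod.snd = ν) (t : ℝ≥0∞)
    (ht : derr p T e μ + (derr p T e μ + tcost p γ ^ (1 / p) + derr p T e ν) + derr p T e ν < t) :
    ∃ M : ι → ι → ℚ, tcost p (cand T M ν μ) ^ (1 / p) < t := by
  have hp0 : (0 : ℝ) < p := by linarith
  have hγ : IsProbabilityMeasure γ := by
    constructor
    have : μ Set.univ = 1 := measure_univ
    rwa [← h1, Measure.map_apply measurable_fst MeasurableSet.univ, Set.preimage_univ] at this
  have hm : ∀ i, MeasurableSet (T ⁻¹' {i}) := fun i => hT (measurableSet_singleton i)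
  set d : ι → ι → ℝ≥0∞ := fun i j => edist (e i) (e j) ^ p with hd
  have hdtop : ∀ i j, d i j ≠ ∞ := fun i j =>
    ENNReal.rpow_ne_top_of_nonneg hp0.le (edist_ne_top _ _)
  set C : ℝ≥0∞ := ∑ i, ∑ j, d i j with hC
  have hCtop : C ≠ ∞ := by
    refine ENNReal.sum_ne_top.2 fun i _ => ENNReal.sum_ne_top.2 fun j _ => hdtop i j
  set V : ℝ≥0∞ := ∑ i, ∑ j, d i j * γ ((T ⁻¹' {i}) ×ˢ (T ⁻¹' {j})) with hV
  have hVeq : ∫⁻ z, edist (e (T z.1)) (e (T z.2)) ^ p ∂γ = V := lintegral_cells T hT γ d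
  have hlt : derr p T e μ + V ^ (1 / p) + derr p T e ν < t := by
    refine lt_of_le_of_lt ?_ ht
    gcongr
    rw [← hVeq]
    exact (derr_tri p hp T hT e μ ν γ h1 h2).2
  -- choose the precision
  have hcont : Filter.Tendsto (fun η : ℝ => derr p T e μ + (V + C * ENNReal.ofReal η) ^ (1 / p)
      + derr p T e ν) (nhds 0) (nhds (derr p T e μ + V ^ (1 / p) + derr p T e ν)) := by
    have h0 : Filter.Tendsto (fun η : ℝ => V + C * ENNReal.ofReal η) (nhds 0) (nhds V) := by
      have := ENNReal.Tendsto.const_mul (a := C) (ENNReal.tendsto_ofReal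
        (Filter.tendsto_id (α := ℝ) (x := nhds 0))) (Or.inr hCtop)
      simpa using (tendsto_const_nhds (x := V)).add this
    have h3 := (ENNReal.continuous_rpow_const (y := 1 / p)).tendsto V |>.comp h0
    exact (tendsto_const_nhds.add h3).add tendsto_const_nhds
  have hev := (hcont.eventually (gt_mem_nhds hlt)).filter_mono
    (nhdsWithin_le_nhds (s := Set.Ioi 0))
  obtain ⟨η, hη, hη0⟩ := (hev.and self_mem_nhdsWithin).exists
  have hη0 : 0 < η := hη0
  -- the target matrix
  set G : ι → ι → ℝ := fun i j => γ.real ((T ⁻¹' {i}) ×ˢ (T ⁻¹' {j})) with hG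
  have hrow : ∀ i, ∑ j, G i j = μ.real (T ⁻¹' {i}) := by
    intro i
    have h := sum_cells (fun z : S × S => T z.2) (hT.comp measurable_snd) γ
      (Prod.fst ⁻¹' (T ⁻¹' {i})) (measurable_fst (hm i))
    rw [← Measure.map_apply measurable_fst (hm i), h1] at h
    have h' := congrArg ENNReal.toReal h
    rw [ENNReal.toReal_sum (fun i _ => measure_ne_top _ _)] at h'
    exact h'
  have hcol : ∀ j, ∑ i, G i j = ν.real (T ⁻¹' {j}) := by
    intro j
    have h := sum_cells (fun z : S × S => T z.1) (hT.comp measurable_fst) γ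
      (Prod.snd ⁻¹' (T ⁻¹' {j})) (measurable_snd (hm j))
    rw [← Measure.map_apply measurable_snd (hm j), h2] at h
    have h' := congrArg ENNReal.toReal h
    rw [ENNReal.toReal_sum (fun i _ => measure_ne_top _ _)] at h'
    refine Eq.trans (Finset.sum_congr rfl fun i _ => ?_) h'
    rw [hG]
    simp only [Measure.real]
    congr 2
    ext z
    simp [and_comm]
  have hGs : ∑ i, ∑ j, G i j = 1 := by
    simp_rw [hrow]
    exact sum_real_cells T hT μ
  obtain ⟨M, hM0, hM1, hM2, hM3⟩ := exists_rat_matrix G (fun i j => measureReal_nonneg) hGs η hη0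
  have ha : ∀ i, 0 ≤ μ.real (T ⁻¹' {i}) - ∑ k, (M i k : ℝ) := by
    intro i
    rw [← hrow i, ← Finset.sum_sub_distrib]
    exact Finset.sum_nonneg fun k _ => sub_nonneg.2 (hM1 i k)
  have hb : ∀ j, 0 ≤ ν.real (T ⁻¹' {j}) - ∑ k, (M k j : ℝ) := by
    intro j
    rw [← hcol j, ← Finset.sum_sub_distrib]
    exact Finset.sum_nonneg fun k _ => sub_nonneg.2 (hM1 k j)
  have hsa : ∑ i, (μ.real (T ⁻¹' {i}) - ∑ k, (M i k : ℝ)) = 1 - ∑ i, ∑ j, (M i j : ℝ) := by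
    rw [Finset.sum_sub_distrib, sum_real_cells T hT μ]
  have hsb : ∑ j, (ν.real (T ⁻¹' {j}) - ∑ k, (M k j : ℝ)) = 1 - ∑ i, ∑ j, (M i j : ℝ) := by
    rw [Finset.sum_sub_distrib, sum_real_cells T hT ν, Finset.sum_comm]
  have ha1 : ∀ i, μ.real (T ⁻¹' {i}) - ∑ k, (M i k : ℝ) ≤ 1 - ∑ i, ∑ j, (M i j : ℝ) := by
    intro i
    rw [← hsa]
    exact Finset.single_le_sum (f := fun i => μ.real (T ⁻¹' {i}) - ∑ k, (M i k : ℝ))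
      (fun i _ => ha i) (Finset.mem_univ i)
  have hb1 : ∀ j, ν.real (T ⁻¹' {j}) - ∑ k, (M k j : ℝ) ≤ 1 - ∑ i, ∑ j, (M i j : ℝ) := by
    intro i
    rw [← hsb]
    exact Finset.single_le_sum (f := fun j => ν.real (T ⁻¹' {j}) - ∑ k, (M k j : ℝ))
      (fun i _ => hb i) (Finset.mem_univ i)
  have hpos : 0 < 1 - ∑ i, ∑ j, (M i j : ℝ) := by linarith
  set π : ι → ι → ℝ := fixM (fun i j => (M i j : ℝ)) (fun i => μ.real (T ⁻¹' {i}))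
      (fun j => ν.real (T ⁻¹' {j})) with hπ
  have hπ0 : ∀ i j, 0 ≤ π i j := by
    intro i j
    exact add_nonneg (hM0 i j) (div_nonneg (mul_nonneg (ha i) (hb j)) hpos.le)
  have hπ1 : ∀ i j, π i j ≤ G i j + η := by
    intro i j
    refine add_le_add (hM1 i j) (le_trans ?_ hM3)
    rw [div_le_iff₀ hpos]
    exact mul_le_mul (ha1 i) (hb1 j) (hb j) hpos.le
  refine ⟨M, ?_⟩
  have hcand : cand T M ν μ = gplan T π μ ν := by
    unfold cand
    rw [if_pos ⟨hM2, hπ0⟩]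
  have hmarg := cand_marg T hT M ν μ
  refine lt_of_le_of_lt (derr_tri p hp T hT e μ ν _ hmarg.1 hmarg.2).1 (lt_of_le_of_lt ?_ hη)
  gcongr
  have := lintegral_cells T hT (cand T M ν μ) d
  simp only [hd] at this
  rw [this, hcand, hV, hC, Finset.sum_mul, ← Finset.sum_add_distrib]
  refine Finset.sum_le_sum fun i _ => ?_
  rw [Finset.sum_mul, ← Finset.sum_add_distrib]
  refine Finset.sum_le_sum fun j _ => ?_
  rw [← mul_add]
  refine mul_le_mul_right ((gplan_cell T hT π μ ν i j).trans ?_) _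
  refine (ENNReal.ofReal_le_ofReal (hπ1 i j)).trans (ENNReal.ofReal_add_le.trans ?_)
  rw [hG]
  simp only
  rw [ofReal_measureReal]

end Approx


section Select

variable {S : Type*} [MetricSpace S] [MeasurableSpace S]
variable [TopologicalSpace.SeparableSpace S] [BorelSpace S]

/-- cell map -/
def cellT [Nonempty S] (N : ℕ) (x : S) : Fin (N + 1) :=
  Fin.ofNat (N + 1) (SimpleFunc.nearestPtInd (TopologicalSpace.denseSeq S) N x)

lemma measurable_cellT [Nonempty S] (N : ℕ) : Measurable (cellT N : S → Fin (N + 1)) :=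
  (measurable_from_nat (f := Fin.ofNat (N + 1))).comp
    (SimpleFunc.nearestPtInd (TopologicalSpace.denseSeq S) N).measurable

lemma cellT_pt [Nonempty S] (N : ℕ) (x : S) :
    TopologicalSpace.denseSeq S (cellT N x : Fin (N + 1)) =
      SimpleFunc.nearestPt (TopologicalSpace.denseSeq S) N x := by
  unfold cellT SimpleFunc.nearestPt
  rw [SimpleFunc.map_apply]
  congr 1
  rw [Fin.val_ofNat]
  exact Nat.mod_eq_of_lt (Nat.lt_succ_of_le (SimpleFunc.nearestPtInd_le _ _ _))

lemma derr_tendsto [Nonempty S] (p : ℝ) (hp : 1 ≤ p) (μ : Measure S) (hμ : MemWp p μ) :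
    Filter.Tendsto (fun N => derr p (cellT N) (fun i : Fin (N + 1) =>
      TopologicalSpace.denseSeq S i) μ) Filter.atTop (nhds 0) := by
  have : SecondCountableTopology S := UniformSpace.secondCountable_of_separable S
  have hp0 : (0 : ℝ) < p := by linarith
  unfold derr
  simp_rw [cellT_pt]
  have h : Filter.Tendsto (fun N => ∫⁻ x, edist x
      (SimpleFunc.nearestPt (TopologicalSpace.denseSeq S) N x) ^ p ∂μ) Filter.atTop
      (nhds (∫⁻ x, 0 ∂μ)) := by
    refine tendsto_lintegral_of_dominated_convergence
      (fun x => edist x (TopologicalSpace.denseSeq S 0) ^ p) ?_ ?_ ?_ ?_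
    · intro N
      exact (measurable_id.edist (SimpleFunc.measurable _)).pow_const p
    · intro N
      refine Filter.Eventually.of_forall fun x => ENNReal.rpow_le_rpow ?_ hp0.le
      rw [edist_comm x, edist_comm x]
      exact SimpleFunc.edist_nearestPt_le _ _ (Nat.zero_le N)
    · exact ((memWp_iff p hp (TopologicalSpace.denseSeq S 0) μ).1 hμ).2.ne
    · refine Filter.Eventually.of_forall fun x => ?_
      have h1 : Filter.Tendsto (fun N => SimpleFunc.nearestPt (TopologicalSpace.denseSeq S) N x)
          Filter.atTop (nhds x) := by
        apply SimpleFunc.tendsto_nearestPt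
        rw [(TopologicalSpace.denseRange_denseSeq S).closure_range]
        trivial
      have h2 := (tendsto_const_nhds (x := x)).edist h1
      rw [edist_self] at h2
      have h3 := ((ENNReal.continuous_rpow_const (y := p)).tendsto 0).comp h2
      rwa [ENNReal.zero_rpow_of_pos hp0] at h3
  rw [lintegral_zero] at h
  have h3 := ((ENNReal.continuous_rpow_const (y := 1 / p)).tendsto 0).comp h
  rwa [ENNReal.zero_rpow_of_pos (by positivity)] at h3

lemma exists_family [Nonempty S] (p : ℝ) (hp : 1 ≤ p) (ν : Measure S) (hν : MemWp p ν) :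
    ∃ κ : ℕ → Measure S → Measure (S × S), (∀ k, Measurable (κ k)) ∧
      (∀ k μ, IsProbabilityMeasure μ → (κ k μ).map Prod.fst = μ ∧ (κ k μ).map Prod.snd = ν) ∧
      ∀ μ, MemWp p μ → ∀ t, ENNReal.ofReal (wassW (fun u v => dist u v) p μ ν ^ p) < t →
        ∃ k, tcost p (κ k μ) < t := by
  have hp0 : (0 : ℝ) < p := by linarith
  have hνp : IsProbabilityMeasure ν := hν.1
  obtain ⟨u, hu⟩ := exists_surjective_nat (Σ N : ℕ, (Fin (N + 1) → Fin (N + 1) → ℚ))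
  refine ⟨fun k μ => cand (cellT (u k).1) (u k).2 ν μ, fun k => ?_, fun k μ hμ => ?_, ?_⟩
  · exact measurable_cand _ (measurable_cellT _) _ ν
  · exact cand_marg _ (measurable_cellT _) _ ν μ
  · intro μ hμ t ht
    have hμp : IsProbabilityMeasure μ := hμ.1
    obtain ⟨γ, h1, h2, h3⟩ := exists_plan_lt p hp μ ν hμ hν t ht
    have h4 : tcost p γ ^ (1 / p) < t ^ (1 / p) := ENNReal.rpow_lt_rpow h3 (by positivity)
    have hT1 := derr_tendsto p hp μ hμ
    have hT2 := derr_tendsto p hp ν hν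
    have hT3 := (hT1.add ((hT1.add (tendsto_const_nhds (x := tcost p γ ^ (1 / p)))).add hT2)).add hT2
    simp only [zero_add, add_zero] at hT3
    obtain ⟨N, hN⟩ := (hT3.eventually (gt_mem_nhds h4)).exists
    obtain ⟨M, hM⟩ := cand_approx p hp (cellT N) (measurable_cellT N) _ μ ν γ h1 h2 _ hN
    obtain ⟨k, hk⟩ := hu ⟨N, M⟩
    refine ⟨k, ?_⟩
    have hk' : cand (cellT (u k).1) (u k).2 ν μ = cand (cellT N) M ν μ := by rw [hk]
    show tcost p (cand (cellT (u k).1) (u k).2 ν μ) < t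
    rw [hk']
    exact (ENNReal.rpow_lt_rpow_iff (z := 1 / p) (by positivity)).1 hM

lemma memWp_dirac (p : ℝ) (hp : 1 ≤ p) (x₀ : S) : MemWp p (Measure.dirac x₀) := by
  rw [memWp_iff p hp x₀]
  refine ⟨inferInstance, ?_⟩
  unfold tmom
  rw [lintegral_dirac' _ (meas_edist1 p x₀), edist_self,
    ENNReal.zero_rpow_of_pos (by linarith)]
  simp

lemma exists_retract [Nonempty S] (p : ℝ) (hp : 1 ≤ p) :
    ∃ r : Measure S → Measure S, Measurable r ∧ (∀ μ, MemWp p (r μ)) ∧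
      ∀ μ, MemWp p μ → r μ = μ := by
  classical
  obtain ⟨x₀⟩ := id ‹Nonempty S›
  refine ⟨fun μ => if MemWp p μ then μ else Measure.dirac x₀, ?_, ?_, ?_⟩
  · exact Measurable.ite (measurableSet_memWp p hp) measurable_id measurable_const
  · intro μ
    dsimp only
    split_ifs with h
    · exact h
    · exact memWp_dirac p hp x₀
  · intro μ h
    simp [h]

lemma exists_selection [Nonempty S] (p : ℝ) (hp : 1 ≤ p) (ν : Measure S) (hν : MemWp p ν)
    (r : Measure S → Measure S) (hr : Measurable r) (hr1 : ∀ μ, MemWp p (r μ)) :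
    ∃ g : Measure S → ℝ≥0∞, Measurable g ∧
      (∀ μ, g μ = ENNReal.ofReal (wassW (fun u v => dist u v) p (r μ) ν ^ p)) ∧
      ∀ ε : ℝ≥0∞, ε ≠ 0 → ∃ κ : Measure S → Measure (S × S), Measurable κ ∧
        (∀ μ, (κ μ).map Prod.fst = r μ) ∧ (∀ μ, (κ μ).map Prod.snd = ν) ∧
        ∀ μ, tcost p (κ μ) ≤ g μ + ε := by
  classical
  obtain ⟨κ, h1, h2, h3⟩ := exists_family p hp ν hν
  have hg : Measurable fun μ => ⨅ k, tcost p (κ k (r μ)) :=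
    Measurable.iInf fun k => (measurable_tcost p).comp ((h1 k).comp hr)
  have hgeq : ∀ μ, ⨅ k, tcost p (κ k (r μ)) =
      ENNReal.ofReal (wassW (fun u v => dist u v) p (r μ) ν ^ p) := by
    intro μ
    apply le_antisymm
    · refine le_of_forall_gt fun t ht => ?_
      obtain ⟨k, hk⟩ := h3 (r μ) (hr1 μ) t ht
      exact (iInf_le _ k).trans_lt hk
    · refine le_iInf fun k => ?_
      have := h2 k (r μ) (hr1 μ).1
      exact wass_le_cost p hp _ _ _ this.1 this.2
  refine ⟨_, hg, hgeq, fun ε hε => ?_⟩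
  have hex : ∀ μ, ∃ k, tcost p (κ k (r μ)) < (⨅ k, tcost p (κ k (r μ))) + ε := by
    intro μ
    apply h3 (r μ) (hr1 μ)
    rw [hgeq]
    exact ENNReal.lt_add_right ENNReal.ofReal_ne_top hε
  have hk : Measurable fun μ => Nat.find (hex μ) := by
    apply measurable_find
    intro k
    exact measurableSet_lt ((measurable_tcost p).comp ((h1 k).comp hr)) (hg.add_const ε)
  refine ⟨fun μ => κ (Nat.find (hex μ)) (r μ), ?_, ?_, ?_, ?_⟩
  · have hF : Measurable fun q : ℕ × Measure S => κ q.1 q.2 :=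
      measurable_from_prod_countable_right fun k => h1 k
    exact hF.comp (hk.prodMk hr)
  · exact fun μ => (h2 _ (r μ) (hr1 μ).1).1
  · exact fun μ => (h2 _ (r μ) (hr1 μ).1).2
  · exact fun μ => (Nat.find_spec (hex μ)).le

end Select

section Gen
variable {X : Type*} [MeasurableSpace X] [MeasurableSpace.CountablyGenerated X]

/-- countable generating pi-system, indexed by finsets -/
def genF (X : Type*) [MeasurableSpace X] [MeasurableSpace.CountablyGenerated X]
    (F : Finset ℕ) : Set X := ⋂ i ∈ F, MeasurableSpace.natGeneratingSequence X i

lemma measurableSet_genF (F : Finset ℕ) : MeasurableSet (genF X F) :=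
  F.measurableSet_biInter fun i _ => MeasurableSpace.measurableSet_natGeneratingSequence i

lemma isPiSystem_genF : IsPiSystem (Set.range (genF X)) := by
  classical
  rintro _ ⟨F, rfl⟩ _ ⟨G, rfl⟩ -
  refine ⟨F ∪ G, ?_⟩
  ext x
  simp only [genF, Set.mem_iInter, Set.mem_inter_iff, Finset.mem_union]
  constructor
  · intro h
    exact ⟨fun i hi => h i (Or.inl hi), fun i hi => h i (Or.inr hi)⟩
  · rintro ⟨h1, h2⟩ i (hi | hi)
    · exact h1 i hi
    · exact h2 i hi

lemma generateFrom_genF :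
    ‹MeasurableSpace X› = MeasurableSpace.generateFrom (Set.range (genF X)) := by
  apply le_antisymm
  · conv_lhs => rw [← MeasurableSpace.generateFrom_natGeneratingSequence X]
    apply MeasurableSpace.generateFrom_mono
    rintro _ ⟨i, rfl⟩
    exact ⟨{i}, by simp [genF]⟩
  · apply MeasurableSpace.generateFrom_le
    rintro _ ⟨F, rfl⟩
    exact measurableSet_genF F

lemma measurableSet_singleton_prob (ν : Measure X) [IsProbabilityMeasure ν] :
    MeasurableSet ({ν} : Set (Measure X)) := by
  have : ({ν} : Set (Measure X)) = ⋂ F : Finset ℕ, {μ | μ (genF X F) = ν (genF X F)} := by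
    ext μ
    simp only [Set.mem_singleton_iff, Set.mem_iInter]
    constructor
    · rintro rfl F
      rfl
    · intro h
      have hu : μ Set.univ = ν Set.univ := by
        have := h ∅
        simpa [genF] using this
      symm
      refine ext_of_generate_finite _ generateFrom_genF isPiSystem_genF ?_ hu.symm
      rintro _ ⟨F, rfl⟩
      exact (h F).symm
  rw [this]
  refine MeasurableSet.iInter fun F => ?_
  exact Measure.measurable_coe (measurableSet_genF F) (measurableSet_singleton _)

lemma countablyGenerated_prob : MeasurableSpace.CountablyGenerated (ProbabilityMeasure X) := by
  let Φ : ProbabilityMeasure X → (Finset ℕ → ℝ≥0∞) := fun μ F => (μ : Measure X) (genF X F)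
  have hle : (inferInstance : MeasurableSpace (ProbabilityMeasure X)) =
      MeasurableSpace.comap Φ inferInstance := by
    apply le_antisymm
    · have : ∀ a : ProbabilityMeasure X, IsProbabilityMeasure (a : Measure X) := fun a => a.2
      refine (measurable_iff_comap_le (m₁ := MeasurableSpace.comap Φ inferInstance)
        (m₂ := (inferInstance : MeasurableSpace (Measure X)))
        (f := fun μ : ProbabilityMeasure X => (μ : Measure X))).1 ?_
      refine @Measurable.measure_of_isPiSystem_of_isProbabilityMeasure _ _ (MeasurableSpace.comap Φ inferInstance) _ 
        (fun μ : ProbabilityMeasure X => (μ : Measure X)) this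
        _ generateFrom_genF isPiSystem_genF ?_
      rintro _ ⟨F, rfl⟩
      exact (measurable_pi_apply F).comp (comap_measurable Φ)
    · rw [← measurable_iff_comap_le] 
      refine measurable_pi_iff.2 fun F => ?_
      exact (Measure.measurable_coe (measurableSet_genF F)).comp measurable_subtype_coe
  have h2 := MeasurableSpace.CountablyGenerated.comap Φ
  rw [← hle] at h2
  exact h2

/-- a.e. equality of disintegrations with values in measures on measures -/
lemma ae_eq_of_sets {V : Type*} [MeasurableSpace V] (ρ : Measure V) [IsProbabilityMeasure ρ]
    [Nonempty X]
    (κ η : V → Measure (Measure X)) (hκ : Measurable κ) (hη : Measurable η)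
    (hκ1 : ∀ v, IsProbabilityMeasure (κ v)) (hη1 : ∀ v, IsProbabilityMeasure (η v))
    (hκ2 : ∀ᵐ v ∂ρ, ∀ᵐ μ ∂(κ v), IsProbabilityMeasure μ)
    (hη2 : ∀ᵐ v ∂ρ, ∀ᵐ μ ∂(η v), IsProbabilityMeasure μ)
    (h : ∀ A, MeasurableSet A → ∀ B, MeasurableSet B →
      ∫⁻ v in A, κ v B ∂ρ = ∫⁻ v in A, η v B ∂ρ) :
    ∀ᵐ v ∂ρ, κ v = η v := by
  classical
  obtain ⟨x₀⟩ := id ‹Nonempty X›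
  have := countablyGenerated_prob (X := X)
  let R : Measure X → ProbabilityMeasure X := fun μ =>
    if h : IsProbabilityMeasure μ then ⟨μ, h⟩ else ⟨Measure.dirac x₀, inferInstance⟩
  have hR' : ∀ μ, ((R μ : ProbabilityMeasure X) : Measure X) =
      if IsProbabilityMeasure μ then μ else Measure.dirac x₀ := by
    intro μ
    by_cases h : IsProbabilityMeasure μ <;> simp [R, h]
  have hR : Measurable R := by
    refine Measurable.subtype_mk (f := fun μ => ((R μ : ProbabilityMeasure X) : Measure X)) ?_
    simp_rw [hR']
    exact Measurable.ite measurableSet_isProb measurable_id measurable_const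
  let K : Kernel V (ProbabilityMeasure X) := ⟨fun v => (κ v).map R, (Measure.measurable_map R hR).comp hκ⟩
  let H : Kernel V (ProbabilityMeasure X) := ⟨fun v => (η v).map R, (Measure.measurable_map R hR).comp hη⟩
  have : IsMarkovKernel K := ⟨fun v => Measure.isProbabilityMeasure_map hR.aemeasurable⟩
  have : IsMarkovKernel H := ⟨fun v => Measure.isProbabilityMeasure_map hR.aemeasurable⟩
  have hKH : ρ ⊗ₘ K = ρ ⊗ₘ H := by
    refine Measure.ext_prod (fun {A B} hA hB => ?_)
    rw [Measure.compProd_apply_prod hA hB, Measure.compProd_apply_prod hA hB]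
    have := h A hA (R ⁻¹' B) (hR hB)
    convert this using 2
    · ext v
      exact Measure.map_apply hR hB
    · ext v
      exact Measure.map_apply hR hB
  have hback : ∀ P : Measure (Measure X), (∀ᵐ μ ∂P, IsProbabilityMeasure μ) →
      (P.map R).map (fun μ : ProbabilityMeasure X => (μ : Measure X)) = P := by
    intro P hP
    have hc : Measurable (fun μ : ProbabilityMeasure X => (μ : Measure X)) := measurable_subtype_coe
    rw [Measure.map_map hc hR]
    conv_rhs => rw [← Measure.map_id (μ := P)]
    apply Measure.map_congr
    filter_upwards [hP] with μ hμ
    simp [hR', hμ]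
  filter_upwards [Kernel.ae_eq_of_compProd_eq hKH, hκ2, hη2] with v h1 h2 h3
  rw [← hback _ h2, ← hback _ h3]
  exact congrArg _ h1
end Gen

section Emp
variable {X : Type*} [MeasurableSpace X]

/-- empirical measure of a finite vector -/
def emp (m : ℕ) (x : Fin m → X) : Measure X := (m : ℝ≥0∞)⁻¹ • ∑ i, Measure.dirac (x i)

lemma emp_apply (m : ℕ) (x : Fin m → X) (A : Set X) (hA : MeasurableSet A) :
    emp m x A = (m : ℝ≥0∞)⁻¹ * ∑ i, A.indicator 1 (x i) := by
  simp only [emp, Measure.smul_apply, Measure.finsetSum_apply, smul_eq_mul,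
    Measure.dirac_apply' _ hA]

lemma measurable_emp (m : ℕ) : Measurable (emp m : (Fin m → X) → Measure X) := by
  refine Measure.measurable_of_measurable_coe _ fun A hA => ?_
  simp_rw [emp_apply m _ A hA]
  refine Measurable.const_mul ?_ _
  refine Finset.measurable_sum _ fun i _ => ?_
  exact (measurable_one.indicator hA).comp (measurable_pi_apply i)

lemma empShift_eq (n m : ℕ) (ω : ℕ → X) :
    empShift n m ω = emp m (fun i : Fin m => ω (i + n)) := by
  simp only [empShift, emp, Finset.sum_range]

lemma lintegral_emp (m : ℕ) (x : Fin m → X) (f : X → ℝ≥0∞) (hf : Measurable f) :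
    ∫⁻ a, f a ∂(emp m x) = (m : ℝ≥0∞)⁻¹ * ∑ i, f (x i) := by
  simp only [emp, lintegral_smul_measure, lintegral_finsetSum_measure, smul_eq_mul,
    lintegral_dirac' _ hf]

lemma isProb_emp (m : ℕ) (hm : 1 ≤ m) (x : Fin m → X) : IsProbabilityMeasure (emp m x) := by
  constructor
  rw [emp_apply m x _ MeasurableSet.univ]
  simp
  exact ENNReal.inv_mul_cancel (by simp; omega) (by simp)

lemma map_emp {Y : Type*} [MeasurableSpace Y] (m : ℕ) (x : Fin m → X) (f : X → Y)
    (hf : Measurable f) : (emp m x).map f = emp m (fun i => f (x i)) := by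
  ext A hA
  rw [Measure.map_apply hf hA, emp_apply _ _ _ hA, emp_apply _ _ _ (hf hA)]
  rfl

lemma measurable_pi_const {V : Type*} [MeasurableSpace V] (m : ℕ) (f : V → Measure X)
    (hf : Measurable f) (hf1 : ∀ v, IsProbabilityMeasure (f v)) :
    Measurable (fun v => Measure.pi fun _ : Fin m => f v) := by
  refine Measurable.measure_of_isPiSystem_of_isProbabilityMeasure generateFrom_pi.symm
    isPiSystem_pi ?_
  rintro _ ⟨s, hs, rfl⟩
  simp only [Measure.pi_pi]
  refine Finset.measurable_prod _ fun i _ => ?_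
  exact (Measure.measurable_coe (hs i (Set.mem_univ i))).comp hf

lemma lintegral_pi_avg (m : ℕ) (hm : 1 ≤ m) (γ : Measure X) [IsProbabilityMeasure γ]
    (f : X → ℝ≥0∞) (hf : Measurable f) :
    ∫⁻ z : Fin m → X, (m : ℝ≥0∞)⁻¹ * ∑ i, f (z i) ∂(Measure.pi fun _ => γ) = ∫⁻ a, f a ∂γ := by
  have hfi : ∀ i : Fin m, Measurable (fun z : Fin m → X => f (z i)) :=
    fun i => hf.comp (measurable_pi_apply i)
  rw [lintegral_const_mul _ (Finset.measurable_sum _ fun i _ => hfi i),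
    lintegral_finsetSum _ fun i _ => hfi i]
  have : ∀ i : Fin m, ∫⁻ z : Fin m → X, f (z i) ∂(Measure.pi fun _ => γ) = ∫⁻ a, f a ∂γ := by
    intro i
    exact (measurePreserving_eval (fun _ : Fin m => γ) i).lintegral_comp hf
  simp_rw [this]
  simp
  rw [← mul_assoc, ENNReal.inv_mul_cancel (by simp; omega) (by simp), one_mul]

lemma pi_map_const {Y : Type*} [MeasurableSpace Y] (m : ℕ) (γ : Measure X)
    [IsProbabilityMeasure γ] (f : X → Y) (hf : Measurable f) :
    (Measure.pi fun _ : Fin m => γ).map (fun z i => f (z i)) =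
      Measure.pi fun _ : Fin m => γ.map f := by
  have := Measure.isProbabilityMeasure_map (μ := γ) hf.aemeasurable
  exact Measure.pi_map_pi (fun _ => hf.aemeasurable)
end Emp

section Det
variable {S : Type*} [MetricSpace S] [MeasurableSpace S] [TopologicalSpace.SeparableSpace S]
  [BorelSpace S]

lemma memWp_emp (p : ℝ) (hp : 1 ≤ p) (m : ℕ) (hm : 1 ≤ m) (x : Fin m → S) :
    MemWp p (emp m x) := by
  have hx : S := x ⟨0, hm⟩
  rw [memWp_iff p hp hx]
  refine ⟨isProb_emp m hm x, ?_⟩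
  unfold tmom
  rw [lintegral_emp m x _ (meas_edist1 p hx)]
  refine ENNReal.mul_lt_top (by simp; omega) ?_
  refine ENNReal.sum_lt_top.2 fun i _ => ?_
  exact ENNReal.rpow_lt_top_of_nonneg (by linarith) (edist_ne_top _ _)

lemma wass_emp_le (p : ℝ) (hp : 1 ≤ p) (m : ℕ) (z : Fin m → S × S) :
    ENNReal.ofReal (wassW (fun u v => dist u v) p (emp m (fun i => (z i).1))
      (emp m (fun i => (z i).2)) ^ p) ≤ (m : ℝ≥0∞)⁻¹ * ∑ i, edist (z i).1 (z i).2 ^ p := by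
  refine (wass_le_cost p hp _ _ (emp m z) (map_emp m z _ measurable_fst)
    (map_emp m z _ measurable_snd)).trans (le_of_eq ?_)
  unfold tcost
  rw [lintegral_emp m z _ (meas_edist2 p)]

/-- law of the empirical measure when the vector is a mixture of iid laws -/
def mixEmp (m : ℕ) (r : Measure S → Measure S) (P : Measure (Measure S)) :
    Measure (Measure S) :=
  (P.bind fun μ => Measure.pi fun _ : Fin m => r μ).map (emp m)

lemma bind_map' {A B C : Type*} [MeasurableSpace A] [MeasurableSpace B] [MeasurableSpace C]
    (P : Measure A) (k : A → Measure B) (hk : Measurable k) (f : B → C) (hf : Measurable f) :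
    (P.bind k).map f = P.bind fun a => (k a).map f := by
  ext E hE
  have hk2 : Measurable (fun a => (k a).map f) := (Measure.measurable_map f hf).comp hk
  rw [Measure.map_apply hf hE, Measure.bind_apply (hf hE) hk.aemeasurable,
    Measure.bind_apply hE hk2.aemeasurable]
  refine lintegral_congr fun a => ?_
  rw [Measure.map_apply hf hE]

lemma bind_const' {A B : Type*} [MeasurableSpace A] [MeasurableSpace B]
    (P : Measure A) [IsProbabilityMeasure P] (Q : Measure B) : (P.bind fun _ => Q) = Q := by
  rw [Measure.bind_const]; simp

lemma mix_coupling (p : ℝ) (hp : 1 ≤ p) (m : ℕ) (hm : 1 ≤ m) (P : Measure (Measure S))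
    [IsProbabilityMeasure P] (ν : Measure S) [IsProbabilityMeasure ν]
    (r : Measure S → Measure S) (hr : Measurable r) (hr1 : ∀ μ, IsProbabilityMeasure (r μ))
    (κ : Measure S → Measure (S × S)) (hκ : Measurable κ)
    (h1 : ∀ μ, (κ μ).map Prod.fst = r μ) (h2 : ∀ μ, (κ μ).map Prod.snd = ν) :
    ∃ Γ : Measure (Measure S × Measure S), Γ.map Prod.fst = mixEmp m r P ∧
      Γ.map Prod.snd = (Measure.pi fun _ : Fin m => ν).map (emp m) ∧
      ∫⁻ z, ENNReal.ofReal (wassW (fun u v => dist u v) p z.1 z.2 ^ p) ∂Γ ≤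
        ∫⁻ μ, tcost p (κ μ) ∂P := by
  have hκ1 : ∀ μ, IsProbabilityMeasure (κ μ) := by
    intro μ
    constructor
    have := congrArg (fun q => q Set.univ) (h1 μ)
    simp only [Measure.map_apply measurable_fst MeasurableSet.univ, Set.preimage_univ] at this
    rw [this]
    exact (hr1 μ).measure_univ
  have hpi := measurable_pi_const m κ hκ hκ1
  have ef : Measurable (fun z : Fin m → S × S => emp m (fun i => (z i).1)) :=
    (measurable_emp m).comp (by fun_prop)
  have es : Measurable (fun z : Fin m → S × S => emp m (fun i => (z i).2)) :=
    (measurable_emp m).comp (by fun_prop)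
  refine ⟨(P.bind fun μ => Measure.pi fun _ : Fin m => κ μ).map
    (fun z => (emp m (fun i => (z i).1), emp m (fun i => (z i).2))), ?_, ?_, ?_⟩
  · rw [Measure.map_map measurable_fst (ef.prodMk es), mixEmp]
    change Measure.map (emp m ∘ fun (z : Fin m → S × S) i => (z i).1) _ = _
    rw [← Measure.map_map (g := emp m) (f := fun z : Fin m → S × S => fun i => (z i).1)
      (measurable_emp m) (by fun_prop) ]
    congr 1
    rw [bind_map' _ _ hpi _ (by fun_prop)]
    congr 1
    ext1 μ
    rw [pi_map_const m (κ μ) Prod.fst measurable_fst, h1]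
  · rw [Measure.map_map measurable_snd (ef.prodMk es)]
    change Measure.map (emp m ∘ fun (z : Fin m → S × S) i => (z i).2) _ = _
    rw [← Measure.map_map (g := emp m) (f := fun z : Fin m → S × S => fun i => (z i).2)
      (measurable_emp m) (by fun_prop) ]
    congr 1
    rw [bind_map' _ _ hpi _ (by fun_prop)]
    rw [← bind_const' P (Measure.pi fun _ : Fin m => ν)]
    congr 1
    ext1 μ
    rw [pi_map_const m (κ μ) Prod.snd measurable_snd, h2]
  · refine (lintegral_map_le _ _).trans ?_
    refine (lintegral_mono fun z => wass_emp_le p hp m z).trans ?_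
    have hmeas : Measurable (fun z : Fin m → S × S =>
        (m : ℝ≥0∞)⁻¹ * ∑ i, edist (z i).1 (z i).2 ^ p) :=
      Measurable.const_mul (Finset.measurable_sum _ fun i _ =>
        (meas_edist2 p).comp (measurable_pi_apply i)) _
    rw [Measure.lintegral_bind hpi.aemeasurable hmeas.aemeasurable]
    refine le_of_eq (lintegral_congr fun μ => ?_)
    exact lintegral_pi_avg m hm (κ μ) _ (meas_edist2 p)
end Det

section Det2
variable {S : Type*} [MetricSpace S] [MeasurableSpace S] [TopologicalSpace.SeparableSpace S]
  [BorelSpace S]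

lemma lintegral_tmom_mix (p : ℝ) (m : ℕ) (hm : 1 ≤ m) (x₀ : S) (P : Measure (Measure S))
    (r : Measure S → Measure S) (hr : Measurable r) (hr1 : ∀ μ, IsProbabilityMeasure (r μ)) :
    ∫⁻ μ, tmom p x₀ μ ∂(mixEmp m r P) = ∫⁻ μ, tmom p x₀ (r μ) ∂P := by
  have hpi := measurable_pi_const m r hr hr1
  unfold mixEmp
  have hte : Measurable (fun x : Fin m → S => tmom p x₀ (emp m x)) :=
    (measurable_tmom p x₀).comp (measurable_emp m)
  rw [lintegral_map (measurable_tmom p x₀) (measurable_emp m),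
    Measure.lintegral_bind hpi.aemeasurable hte.aemeasurable]
  refine lintegral_congr fun μ => ?_
  unfold tmom
  simp_rw [lintegral_emp m _ _ (meas_edist1 p x₀)]
  exact lintegral_pi_avg m hm (r μ) _ (meas_edist1 p x₀)

lemma isProb_mixEmp (m : ℕ) (P : Measure (Measure S)) [IsProbabilityMeasure P]
    (r : Measure S → Measure S) (hr : Measurable r) (hr1 : ∀ μ, IsProbabilityMeasure (r μ)) :
    IsProbabilityMeasure (mixEmp m r P) := by
  have hpi := measurable_pi_const m r hr hr1
  have : IsProbabilityMeasure (P.bind fun μ => Measure.pi fun _ : Fin m => r μ) := by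
    constructor
    rw [Measure.bind_apply MeasurableSet.univ hpi.aemeasurable]
    simp
  exact Measure.isProbabilityMeasure_map (measurable_emp m).aemeasurable

lemma ae_map_emp [Nonempty S] (p : ℝ) (hp : 1 ≤ p) (m : ℕ) (hm : 1 ≤ m)
    (Q : Measure (Fin m → S)) :
    ∀ᵐ μ ∂(Q.map (emp m)), MemWp p μ := by
  rw [ae_map_iff (measurable_emp m).aemeasurable (measurableSet_memWp p hp)]
  exact Filter.Eventually.of_forall fun x => memWp_emp p hp m hm x

lemma det_ineq [Nonempty S] (p : ℝ) (hp : 1 ≤ p) (m : ℕ) (hm : 1 ≤ m) (P : Measure (Measure S))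
    [IsProbabilityMeasure P] (ν : Measure S) (hν : MemWp p ν)
    (r : Measure S → Measure S) (hr : Measurable r) (hr1 : ∀ μ, MemWp p (r μ))
    (hr2 : ∀ μ, MemWp p μ → r μ = μ) (hP : ∀ᵐ μ ∂P, MemWp p μ) :
    wassW (fun μ ν => wassW (fun u v => dist u v) p μ ν) p (mixEmp m r P)
        ((Measure.pi fun _ : Fin m => ν).map (emp m)) ≤
      wassW (fun μ ν => wassW (fun u v => dist u v) p μ ν) p P (Measure.dirac ν) := by
  classical
  have hp0 : (0 : ℝ) < p := by linarith
  have hνp : IsProbabilityMeasure ν := hν.1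
  have hrp : ∀ μ, IsProbabilityMeasure (r μ) := fun μ => (hr1 μ).1
  have : SecondCountableTopology S := UniformSpace.secondCountable_of_separable S
  have hW : ∀ μ ν : Measure S, 0 ≤ wassW (fun u v => dist u v) p μ ν := fun μ ν =>
    wassW_nonneg _ (fun _ _ => dist_nonneg) p μ ν
  obtain ⟨g, hg, hg1, hg2⟩ := exists_selection p hp ν hν r hr hr1
  set I := ∫⁻ μ, g μ ∂P with hI
  set R := (Measure.pi fun _ : Fin m => ν).map (emp m) with hR
  have hRp : IsProbabilityMeasure R :=
    Measure.isProbabilityMeasure_map (measurable_emp m).aemeasurable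
  have hQp := isProb_mixEmp m P r hr hrp
  rcases eq_or_ne I ∞ with hItop | hItop
  · -- infinite case
    obtain ⟨x₀⟩ := id ‹Nonempty S›
    have hnot : ¬ Integrable (fun z : Measure S × Measure S =>
        wassW (fun u v => dist u v) p z.1 z.2 ^ p) ((mixEmp m r P).prod R) := by
      intro hInt
      have hfin : ∫⁻ z : Measure S × Measure S,
          ENNReal.ofReal (wassW (fun u v => dist u v) p z.1 z.2 ^ p) ∂((mixEmp m r P).prod R)
          < ∞ := by
        have := hInt.2
        rwa [hasFiniteIntegral_iff_ofReal
          (Filter.Eventually.of_forall fun z => Real.rpow_nonneg (hW _ _) _)] at this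
      have hmR : ∫⁻ μ, tmom p x₀ μ ∂(R) = tmom p x₀ ν := by
        rw [hR, lintegral_map (measurable_tmom p x₀) (measurable_emp m)]
        unfold tmom
        simp_rw [lintegral_emp m _ _ (meas_edist1 p x₀)]
        exact lintegral_pi_avg m hm ν _ (meas_edist1 p x₀)
      have hνm : tmom p x₀ ν < ∞ := ((memWp_iff p hp x₀ ν).1 hν).2
      have ha1 : ∀ᵐ z ∂((mixEmp m r P).prod R), MemWp p z.1 :=
        Measure.quasiMeasurePreserving_fst.ae (ae_map_emp p hp m hm _)
      have ha2 : ∀ᵐ z ∂((mixEmp m r P).prod R), MemWp p z.2 :=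
        Measure.quasiMeasurePreserving_snd.ae (ae_map_emp p hp m hm _)
      have hle : ∀ᵐ z ∂((mixEmp m r P).prod R), tmom p x₀ z.1 ≤ 2 ^ (p - 1) *
          (ENNReal.ofReal (wassW (fun u v => dist u v) p z.1 z.2 ^ p) + (1 + tmom p x₀ z.2)) := by
        filter_upwards [ha1, ha2] with z h1 h2
        obtain ⟨γ, e1, e2, e3⟩ := exists_plan_lt p hp z.1 z.2 h1 h2
          (ENNReal.ofReal (wassW (fun u v => dist u v) p z.1 z.2 ^ p) + 1)
          (ENNReal.lt_add_right ENNReal.ofReal_ne_top one_ne_zero)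
        refine (tmom_le p hp x₀ z.1 z.2 γ e1 e2).trans ?_
        rw [← add_assoc]
        gcongr
      have hQfin : ∫⁻ μ, tmom p x₀ μ ∂(mixEmp m r P) < ∞ := by
        have e : ∫⁻ z, tmom p x₀ z.1 ∂((mixEmp m r P).prod R) =
            ∫⁻ μ, tmom p x₀ μ ∂(mixEmp m r P) := by
          rw [← lintegral_map (measurable_tmom p x₀) measurable_fst, Measure.map_fst_prod]
          simp
        have e2 : ∫⁻ z, tmom p x₀ z.2 ∂((mixEmp m r P).prod R) = ∫⁻ μ, tmom p x₀ μ ∂(R) := by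
          rw [← lintegral_map (measurable_tmom p x₀) measurable_snd, Measure.map_snd_prod]
          simp
        have hms : Measurable (fun z : Measure S × Measure S => tmom p x₀ z.2) :=
          (measurable_tmom p x₀).comp measurable_snd
        have hms1 : Measurable (fun z : Measure S × Measure S => 1 + tmom p x₀ z.2) :=
          measurable_const.add hms
        rw [← e]
        refine (lintegral_mono_ae hle).trans_lt ?_
        rw [lintegral_const_mul' _ _ (two_rpow_ne_top p hp),
          lintegral_add_right _ hms1,
          lintegral_add_right _ hms, e2, hmR]
        refine ENNReal.mul_lt_top (two_rpow_ne_top p hp).lt_top ?_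
        simp [ENNReal.add_lt_top, hfin, hνm]
      rw [lintegral_tmom_mix p m hm x₀ P r hr hrp] at hQfin
      have hmr : Measurable (fun μ => tmom p x₀ (r μ)) := (measurable_tmom p x₀).comp hr
      have : I ≤ 2 ^ (p - 1) * (∫⁻ μ, tmom p x₀ (r μ) ∂P + tmom p x₀ ν) := by
        calc I ≤ ∫⁻ μ, 2 ^ (p - 1) * (tmom p x₀ (r μ) + tmom p x₀ ν) ∂P := by
              refine lintegral_mono fun μ => ?_
              rw [hg1]
              have e1 : ((r μ).prod ν).map Prod.fst = r μ := by
                rw [Measure.map_fst_prod]; simp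
              have e2 : ((r μ).prod ν).map Prod.snd = ν := by
                rw [Measure.map_snd_prod]; simp
              exact (wass_le_cost p hp _ _ _ e1 e2).trans (tcost_le p hp x₀ _ _ _ e1 e2)
          _ = _ := by
              rw [lintegral_const_mul' _ _ (two_rpow_ne_top p hp), lintegral_add_left hmr]
              simp
      rw [hItop] at this
      refine (lt_irrefl (∞ : ℝ≥0∞)) (this.trans_lt ?_)
      refine ENNReal.mul_lt_top (two_rpow_ne_top p hp).lt_top ?_
      simp [ENNReal.add_lt_top, hQfin, hνm]
    refine le_trans (wassW_le _ hW p _ _ ((mixEmp m r P).prod R) ?_ ?_) ?_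
    · rw [Measure.map_fst_prod]; simp
    · rw [Measure.map_snd_prod]; simp
    · rw [integral_undef hnot, Real.zero_rpow (by positivity)]
      exact wassW_nonneg _ hW p _ _
  · -- finite case
    have hb : wassW (fun μ ν => wassW (fun u v => dist u v) p μ ν) p (mixEmp m r P) R ^ p
        ≤ I.toReal := by
      refine le_of_forall_pos_le_add fun ε hε => ?_
      obtain ⟨κ, k1, k2, k3, k4⟩ := hg2 (ENNReal.ofReal ε) (by simpa using hε)
      obtain ⟨Γ, G1, G2, G3⟩ := mix_coupling p hp m hm P ν r hr hrp κ k1 k2 k3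
      have h1 := wassW_le (fun μ ν => wassW (fun u v => dist u v) p μ ν) hW p _ _ Γ G1 G2
      have hnn : 0 ≤ ∫ z, wassW (fun u v => dist u v) p z.1 z.2 ^ p ∂Γ :=
        integral_nonneg fun z => Real.rpow_nonneg (hW _ _) _
      have h2 := Real.rpow_le_rpow (wassW_nonneg _ hW p _ _) h1 hp0.le
      rw [← Real.rpow_mul hnn, one_div, inv_mul_cancel₀ hp0.ne', Real.rpow_one] at h2
      refine h2.trans ?_
      have h3 := ofReal_integral_le (fun z : Measure S × Measure S =>
        wassW (fun u v => dist u v) p z.1 z.2 ^ p) (fun z => Real.rpow_nonneg (hW _ _) _) Γ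
      have h4 : ENNReal.ofReal (∫ z, wassW (fun u v => dist u v) p z.1 z.2 ^ p ∂Γ) ≤
          I + ENNReal.ofReal ε := by
        refine h3.trans (G3.trans ((lintegral_mono k4).trans ?_))
        rw [lintegral_add_left hg]
        simp [hI]
      have h5 := ENNReal.toReal_mono (by simp [hItop]) h4
      rwa [ENNReal.toReal_ofReal hnn, ENNReal.toReal_add hItop ENNReal.ofReal_ne_top,
        ENNReal.toReal_ofReal hε.le] at h5
    have hb' : wassW (fun μ ν => wassW (fun u v => dist u v) p μ ν) p (mixEmp m r P) R
        ≤ I.toReal ^ (1 / p) := by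
      have := Real.rpow_le_rpow (Real.rpow_nonneg (wassW_nonneg _ hW p _ _) _) hb
        (by positivity : 0 ≤ 1 / p)
      rwa [← Real.rpow_mul (wassW_nonneg _ hW p _ _), mul_one_div_cancel hp0.ne',
        Real.rpow_one] at this
    refine hb'.trans ?_
    refine le_csInf ?_ ?_
    · refine ⟨_, P.prod (Measure.dirac ν), ?_, ?_, rfl⟩
      · rw [Measure.map_fst_prod]; simp
      · rw [Measure.map_snd_prod]; simp
    · rintro _ ⟨γ, g1, g2, rfl⟩
      refine le_of_eq ?_
      congr 1
      have a1 : ∀ᵐ z ∂γ, MemWp p z.1 := by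
        rw [← g1] at hP
        exact ae_of_ae_map measurable_fst.aemeasurable hP
      have a2 : ∀ᵐ z ∂γ, z.2 = ν := by
        have : ∀ᵐ μ ∂(γ.map Prod.snd), μ = ν := by
          rw [g2, ae_dirac_iff]
          exact measurableSet_singleton_prob ν
        exact ae_of_ae_map measurable_snd.aemeasurable this
      have e1 : ∫ z, wassW (fun u v => dist u v) p z.1 z.2 ^ p ∂γ = ∫ z, (g z.1).toReal ∂γ := by
        refine integral_congr_ae ?_
        filter_upwards [a1, a2] with z h1 h2
        rw [hg1, h2, hr2 _ h1, ENNReal.toReal_ofReal (Real.rpow_nonneg (hW _ _) _)]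
      have hgf : Measurable (fun z : Measure S × Measure S => g z.1) := hg.comp measurable_fst
      rw [e1, integral_toReal hgf.aemeasurable
        (Filter.Eventually.of_forall fun z => by rw [hg1]; exact ENNReal.ofReal_lt_top), hI, ← g1,
        lintegral_map hg measurable_fst]
end Det2

section Prob
variable {S : Type*} [MeasurableSpace S]

lemma iid_split (μ : Measure S) [IsProbabilityMeasure μ] (J : Measure (ℕ → S))
    (hJ : ∀ (n : ℕ) (A : Fin n → Set S), (∀ i, MeasurableSet (A i)) →
          J {ω | ∀ i : Fin n, ω (i : ℕ) ∈ A i} = ∏ i, μ (A i)) (n m : ℕ) :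
    J.map (fun ω => ((fun i : Fin n => ω (i : ℕ)), (fun i : Fin m => ω ((i : ℕ) + n)))) =
      (Measure.pi fun _ : Fin n => μ).prod (Measure.pi fun _ : Fin m => μ) := by
  symm
  have hspan : ∀ k : ℕ, Nonempty ((Measure.pi fun _ : Fin k => μ).FiniteSpanningSetsIn
      (Set.univ.pi '' Set.univ.pi fun _ : Fin k => {s : Set S | MeasurableSet s})) := by
    intro k
    refine ⟨⟨fun _ => Set.univ, fun _ => ?_, fun _ => by simp, by simp [Set.iUnion_const]⟩⟩
    exact ⟨fun _ => Set.univ, fun i _ => MeasurableSet.univ, by simp⟩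
  obtain ⟨s1⟩ := hspan n
  obtain ⟨s2⟩ := hspan m
  refine Measure.prod_eq_generateFrom generateFrom_pi generateFrom_pi isPiSystem_pi
    isPiSystem_pi s1 s2 ?_
  rintro _ ⟨A, hA, rfl⟩ _ ⟨B, hB, rfl⟩
  have hA' : ∀ i, MeasurableSet (A i) := fun i => hA i (Set.mem_univ i)
  have hB' : ∀ i, MeasurableSet (B i) := fun i => hB i (Set.mem_univ i)
  rw [Measure.map_apply (by fun_prop)
    ((MeasurableSet.univ_pi hA').prod (MeasurableSet.univ_pi hB')), Measure.pi_pi, Measure.pi_pi]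
  have h := hJ (n + m) (Fin.append A B) (by
    intro i
    refine Fin.addCases (fun i => ?_) (fun i => ?_) i
    · rw [Fin.append_left]; exact hA' i
    · rw [Fin.append_right]; exact hB' i)
  rw [Fin.prod_univ_add] at h
  simp only [Fin.append_left, Fin.append_right] at h
  rw [← h]
  congr 1
  ext ω
  simp only [Set.mem_preimage, Set.mem_prod, Set.mem_univ_pi, Set.mem_ofPred_eq]
  constructor
  · rintro ⟨h1, h2⟩ i
    refine Fin.addCases (fun i => ?_) (fun i => ?_) i
    · rw [Fin.append_left]; exact h1 i
    · rw [Fin.append_right]; simpa [add_comm] using h2 i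
  · intro h
    refine ⟨fun i => ?_, fun i => ?_⟩
    · simpa using h (Fin.castAdd m i)
    · simpa [add_comm] using h (Fin.natAdd n i)

lemma iid_emp (μ : Measure S) [IsProbabilityMeasure μ] (J : Measure (ℕ → S))
    (hJ : ∀ (n : ℕ) (A : Fin n → Set S), (∀ i, MeasurableSet (A i)) →
          J {ω | ∀ i : Fin n, ω (i : ℕ) ∈ A i} = ∏ i, μ (A i)) (n m : ℕ) :
    J.map (empShift n m) = (Measure.pi fun _ : Fin m => μ).map (emp m) := by
  have h := congrArg (fun q => (q.map Prod.snd).map (emp m)) (iid_split μ J hJ n m)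
  rw [Measure.map_snd_prod, measure_univ, one_smul, Measure.map_map measurable_snd (by fun_prop),
    Measure.map_map (measurable_emp m) (by fun_prop)] at h
  rw [← h]
  congr 1
  ext1 ω
  exact empShift_eq n m ω

lemma ident (iid : Measure S → Measure (ℕ → S))
    (hiid : ∀ 𝔭 : Measure S, IsProbabilityMeasure 𝔭 →
      IsProbabilityMeasure (iid 𝔭) ∧
        ∀ (n : ℕ) (A : Fin n → Set S), (∀ i, MeasurableSet (A i)) →
          iid 𝔭 {ω | ∀ i : Fin n, ω (i : ℕ) ∈ A i} = ∏ i, 𝔭 (A i))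
    (ρ : Measure (ℕ → S)) [IsProbabilityMeasure ρ]
    (ptilde : (ℕ → S) → Measure S) (hptilde_meas : Measurable ptilde)
    (hdirect : ∀ C : Set (ℕ → S), MeasurableSet C → ∀ B : Set (Measure S), MeasurableSet B →
      ρ (C ∩ ptilde ⁻¹' B) = ∫⁻ ω in ptilde ⁻¹' B, iid (ptilde ω) C ∂ρ)
    (r : Measure S → Measure S) (hr : Measurable r) (hr1 : ∀ μ, IsProbabilityMeasure (r μ))
    (hr2 : ∀ᵐ ω ∂ρ, r (ptilde ω) = ptilde ω)
    (n : ℕ) (post : (Fin n → S) → Measure (Measure S)) (hpost_meas : Measurable post)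
    (hpost : ∀ (A : Set (Fin n → S)), MeasurableSet A →
      ∀ B : Set (Measure S), MeasurableSet B →
        ρ {ω | (fun i : Fin n => ω (i : ℕ)) ∈ A ∧ ptilde ω ∈ B}
          = ∫⁻ ω in {ω | (fun i : Fin n => ω (i : ℕ)) ∈ A},
              post (fun i : Fin n => ω (i : ℕ)) B ∂ρ)
    (m : ℕ) (A : Set (Fin n → S)) (hA : MeasurableSet A) (E : Set (Fin m → S))
    (hE : MeasurableSet E) :
    ρ {ω | (fun i : Fin n => ω (i : ℕ)) ∈ A ∧ (fun i : Fin m => ω ((i : ℕ) + n)) ∈ E} =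
      ∫⁻ ω in {ω | (fun i : Fin n => ω (i : ℕ)) ∈ A},
        (post (fun i : Fin n => ω (i : ℕ))).bind (fun μ => Measure.pi fun _ : Fin m => r μ) E
          ∂ρ := by
  have hξ : Measurable (fun (ω : ℕ → S) (i : Fin n) => ω (i : ℕ)) := by fun_prop
  have hη : Measurable (fun (ω : ℕ → S) (i : Fin m) => ω ((i : ℕ) + n)) := by fun_prop
  have hpn := measurable_pi_const n r hr hr1
  have hpm := measurable_pi_const m r hr hr1
  have hpx : Measurable (fun ω : ℕ → S => post (fun i : Fin n => ω (i : ℕ))) :=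
    hpost_meas.comp hξ
  let a : Measure S → ℝ≥0∞ := fun μ => (Measure.pi fun _ : Fin n => r μ) A
  let F : Measure S → ℝ≥0∞ := fun μ => (Measure.pi fun _ : Fin m => r μ) E
  have ha : Measurable a := (Measure.measurable_coe hA).comp hpn
  have hF : Measurable F := (Measure.measurable_coe hE).comp hpm
  set CA : Set (ℕ → S) := {ω | (fun i : Fin n => ω (i : ℕ)) ∈ A} with hCA
  have hCAm : MeasurableSet CA := hξ hA
  have hCE : MeasurableSet {ω : ℕ → S | (fun i : Fin n => ω (i : ℕ)) ∈ A ∧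
      (fun i : Fin m => ω ((i : ℕ) + n)) ∈ E} := (hξ hA).inter (hη hE)
  -- values of iid
  have v1 : ∀ μ, IsProbabilityMeasure μ → iid μ {ω | (fun i : Fin n => ω (i : ℕ)) ∈ A ∧
      (fun i : Fin m => ω ((i : ℕ) + n)) ∈ E} =
      (Measure.pi fun _ : Fin n => μ) A * (Measure.pi fun _ : Fin m => μ) E := by
    intro μ hμ
    have h := iid_split μ (iid μ) (hiid μ hμ).2 n m
    rw [← Measure.prod_prod, ← h, Measure.map_apply (by fun_prop) (hA.prod hE)]
    rfl
  have v2 : ∀ μ, IsProbabilityMeasure μ → iid μ CA = (Measure.pi fun _ : Fin n => μ) A := by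
    intro μ hμ
    have h := iid_split μ (iid μ) (hiid μ hμ).2 n m
    have h2 := Measure.prod_prod (μ := Measure.pi fun _ : Fin n => μ)
      (ν := Measure.pi fun _ : Fin m => μ) A Set.univ
    rw [← h, Measure.map_apply (by fun_prop) (hA.prod MeasurableSet.univ), measure_univ,
      mul_one] at h2
    rw [← h2]
    congr 1
    ext ω
    simp [hCA]
  -- first identity
  have s1 : ρ {ω | (fun i : Fin n => ω (i : ℕ)) ∈ A ∧ (fun i : Fin m => ω ((i : ℕ) + n)) ∈ E} =
      ∫⁻ ω, a (ptilde ω) * F (ptilde ω) ∂ρ := by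
    have h := hdirect _ hCE Set.univ MeasurableSet.univ
    rw [Set.preimage_univ, Set.inter_univ, Measure.restrict_univ] at h
    rw [h]
    refine lintegral_congr_ae ?_
    filter_upwards [hr2] with ω hω
    simp only [a, F, hω]
    exact v1 _ (hω ▸ hr1 (ptilde ω))
  -- second identity
  have s2 : (ρ.restrict CA).map ptilde = (ρ.map ptilde).withDensity a := by
    ext B hB
    rw [Measure.map_apply hptilde_meas hB, Measure.restrict_apply (hptilde_meas hB),
      withDensity_apply _ hB, setLIntegral_map hB ha hptilde_meas, Set.inter_comm,
      hdirect CA hCAm B hB]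
    refine lintegral_congr_ae (ae_restrict_of_ae ?_)
    filter_upwards [hr2] with ω hω
    simp only [a, hω]
    exact v2 _ (hω ▸ hr1 (ptilde ω))
  have s3 : (ρ.restrict CA).map ptilde =
      (ρ.restrict CA).bind (fun ω => post (fun i : Fin n => ω (i : ℕ))) := by
    ext B hB
    rw [Measure.map_apply hptilde_meas hB, Measure.restrict_apply (hptilde_meas hB),
      Measure.bind_apply hB hpx.aemeasurable]
    have := hpost A hA B hB
    rw [← this, Set.inter_comm]
    rfl
  have s4 : ∫⁻ ω, a (ptilde ω) * F (ptilde ω) ∂ρ = ∫⁻ μ, F μ ∂((ρ.restrict CA).map ptilde) := by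
    rw [s2, lintegral_withDensity_eq_lintegral_mul _ ha hF, lintegral_map (ha.mul hF) hptilde_meas]
    rfl
  rw [s1, s4, s3, Measure.lintegral_bind hpx.aemeasurable hF.aemeasurable]
  refine lintegral_congr fun ω => ?_
  rw [Measure.bind_apply hE hpm.aemeasurable]
end Prob

lemma ae_one {V : Type*} [MeasurableSpace V] (ρ : Measure V) [IsProbabilityMeasure ρ]
    (f : V → ℝ≥0∞) (h1 : ∀ v, f v ≤ 1) (h : ∫⁻ v, f v ∂ρ = 1) :
    ∀ᵐ v ∂ρ, f v = 1 := by
  have := ae_eq_of_ae_le_of_lintegral_le (μ := ρ) (f := f) (g := fun _ => 1)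
    (Filter.Eventually.of_forall h1) (by rw [h]; simp) aemeasurable_const (by rw [h]; simp)
  exact this

/-- with `ρ`-probability one,
`d^{(p)}_{[[S]_p]}( q_m(ξ^{(n)}), p̂_n^∞ ∘ ẽ_{n,m}⁻¹ ) ≤ d^{(p)}_{[[S]_p]}( π(ξ^{(n)}), δ_{p̂_n} )`. -/
theorem predictive_le_posterior
    {S : Type*} [MetricSpace S] [TopologicalSpace.SeparableSpace S]
    [MeasurableSpace S] [BorelSpace S]
    (hRadon : ∀ μ : Measure S, IsProbabilityMeasure μ → μ.InnerRegular)
    (iid : Measure S → Measure (ℕ → S))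
    (hiid : ∀ 𝔭 : Measure S, IsProbabilityMeasure 𝔭 →
      IsProbabilityMeasure (iid 𝔭) ∧
        ∀ (n : ℕ) (A : Fin n → Set S), (∀ i, MeasurableSet (A i)) →
          iid 𝔭 {ω | ∀ i : Fin n, ω (i : ℕ) ∈ A i} = ∏ i, 𝔭 (A i))
    (ρ : Measure (ℕ → S)) [IsProbabilityMeasure ρ]
    (hexch : ∀ σ : Equiv.Perm ℕ, ρ.map (fun ω => ω ∘ σ) = ρ)
    (ptilde : (ℕ → S) → Measure S) (hptilde_meas : Measurable ptilde)
    (hptilde_prob : ∀ᵐ ω ∂ρ, IsProbabilityMeasure (ptilde ω))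
    (hdirect : ∀ C : Set (ℕ → S), MeasurableSet C → ∀ B : Set (Measure S), MeasurableSet B →
      ρ (C ∩ ptilde ⁻¹' B) = ∫⁻ ω in ptilde ⁻¹' B, iid (ptilde ω) C ∂ρ)
    (p : ℝ) (hp : 1 ≤ p)
    (phat : (n : ℕ) → (Fin n → S) → Measure S)
    (hphat_meas : ∀ n, Measurable (phat n))
    (hphatWp : ∀ n v, MemWp p (phat n v))
    (hptildeWp : ∀ᵐ ω ∂ρ, MemWp p (ptilde ω))
    -- the posterior distributions `π(ξ^{(n)})`
    (post : (n : ℕ) → (Fin n → S) → Measure (Measure S))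
    (hpost_prob : ∀ n v, IsProbabilityMeasure (post n v))
    (hpost_meas : ∀ n, Measurable (post n))
    (hpost : ∀ (n : ℕ) (A : Set (Fin n → S)), MeasurableSet A →
      ∀ B : Set (Measure S), MeasurableSet B →
        ρ {ω | (fun i : Fin n => ω (i : ℕ)) ∈ A ∧ ptilde ω ∈ B}
          = ∫⁻ ω in {ω | (fun i : Fin n => ω (i : ℕ)) ∈ A},
              post n (fun i : Fin n => ω (i : ℕ)) B ∂ρ)
    -- the conditional distributions `q_m(ξ^{(n)})` of `ẽ_{n,m}` given `ξ^{(n)}`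
    (qm : (m n : ℕ) → (Fin n → S) → Measure (Measure S))
    (hqm_prob : ∀ m n v, IsProbabilityMeasure (qm m n v))
    (hqm_meas : ∀ m n, Measurable (qm m n))
    (hqm : ∀ (m n : ℕ) (A : Set (Fin n → S)), MeasurableSet A →
      ∀ B : Set (Measure S), MeasurableSet B →
        ρ {ω | (fun i : Fin n => ω (i : ℕ)) ∈ A ∧ empShift n m ω ∈ B}
          = ∫⁻ ω in {ω | (fun i : Fin n => ω (i : ℕ)) ∈ A},
              qm m n (fun i : Fin n => ω (i : ℕ)) B ∂ρ) :
    ∀ (m : ℕ), 1 ≤ m → ∀ n : ℕ,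
      ∀ᵐ ω ∂ρ,
        wassW (fun μ ν => wassW (fun u v => dist u v) p μ ν) p
            (qm m n (fun i : Fin n => ω (i : ℕ)))
            ((iid (phat n (fun i : Fin n => ω (i : ℕ)))).map (empShift n m))
          ≤ wassW (fun μ ν => wassW (fun u v => dist u v) p μ ν) p
              (post n (fun i : Fin n => ω (i : ℕ)))
              (Measure.dirac (phat n (fun i : Fin n => ω (i : ℕ)))) := by
  intro m hm n
  have hne : Nonempty S := by
    by_contra hS
    rw [not_nonempty_iff] at hS
    have : IsEmpty (ℕ → S) := ⟨fun f => hS.elim (f 0)⟩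
    have h1 : ρ Set.univ = 1 := measure_univ
    rw [Set.univ_eq_empty_iff.2 this, measure_empty] at h1
    exact zero_ne_one h1
  have : SecondCountableTopology S := UniformSpace.secondCountable_of_separable S
  obtain ⟨r, hr, hr1, hr2⟩ := exists_retract (S := S) p hp
  have hrp : ∀ μ, IsProbabilityMeasure (r μ) := fun μ => (hr1 μ).1
  have hrae : ∀ᵐ ω ∂ρ, r (ptilde ω) = ptilde ω := by
    filter_upwards [hptildeWp] with ω hω using hr2 _ hω
  have hξ : Measurable (fun (ω : ℕ → S) (i : Fin n) => ω (i : ℕ)) := by fun_prop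
  have hη : Measurable (fun (ω : ℕ → S) (i : Fin m) => ω ((i : ℕ) + n)) := by fun_prop
  have hempS : Measurable (empShift n m : (ℕ → S) → Measure S) := by
    have : (empShift n m : (ℕ → S) → Measure S) =
        fun ω => emp m (fun i : Fin m => ω ((i : ℕ) + n)) := by
      ext1 ω
      exact empShift_eq n m ω
    rw [this]
    exact (measurable_emp m).comp hη
  have hpm := measurable_pi_const m r hr hrp
  have hlam : IsProbabilityMeasure (ρ.map (fun (ω : ℕ → S) (i : Fin n) => ω (i : ℕ))) :=
    Measure.isProbabilityMeasure_map hξ.aemeasurable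
  have hmix_meas : Measurable (fun v => mixEmp m r (post n v)) :=
    (Measure.measurable_map _ (measurable_emp m)).comp
      ((Measure.measurable_bind' hpm).comp (hpost_meas n))
  -- the posterior is concentrated on `[S]_p`
  have hpostWp : ∀ᵐ ω ∂ρ, ∀ᵐ μ ∂(post n (fun i : Fin n => ω (i : ℕ))), MemWp p μ := by
    have hms := measurableSet_memWp (S := S) p hp
    have h := hpost n Set.univ MeasurableSet.univ _ hms
    have hone : ρ {ω | (fun i : Fin n => ω (i : ℕ)) ∈ (Set.univ : Set (Fin n → S)) ∧
        ptilde ω ∈ {μ : Measure S | MemWp p μ}} = 1 := by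
      rw [← prob_compl_eq_zero_iff]
      · rw [← mem_ae_iff]
        filter_upwards [hptildeWp] with ω hω
        exact ⟨Set.mem_univ _, hω⟩
      · exact (hξ MeasurableSet.univ).inter (hptilde_meas hms)
    rw [hone] at h
    simp only [Set.mem_univ] at h
    have huniv : {ω : ℕ → S | True} = Set.univ := by
      ext ω
      simp
    rw [huniv, Measure.restrict_univ] at h
    have hpp := fun v => hpost_prob n v
    have h2 := ae_one ρ (fun ω => post n (fun i : Fin n => ω (i : ℕ)) {μ : Measure S | MemWp p μ})
      (fun ω => prob_le_one) h.symm
    filter_upwards [h2] with ω hω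
    exact (prob_compl_eq_zero_iff hms).2 hω
  -- the predictive distribution is concentrated on probability measures
  have hqmP : ∀ᵐ ω ∂ρ, ∀ᵐ μ ∂(qm m n (fun i : Fin n => ω (i : ℕ))),
      IsProbabilityMeasure μ := by
    have hms := measurableSet_isProb (X := S)
    have h := hqm m n Set.univ MeasurableSet.univ _ hms
    have hone : {ω : ℕ → S | (fun i : Fin n => ω (i : ℕ)) ∈ (Set.univ : Set (Fin n → S)) ∧
        empShift n m ω ∈ {μ : Measure S | IsProbabilityMeasure μ}} = Set.univ := by
      refine Set.eq_univ_of_forall fun ω => ⟨Set.mem_univ _, ?_⟩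
      rw [empShift_eq]
      exact isProb_emp m hm _
    rw [hone, measure_univ] at h
    simp only [Set.mem_univ] at h
    have huniv : {ω : ℕ → S | True} = Set.univ := by
      ext ω
      simp
    rw [huniv, Measure.restrict_univ] at h
    have hpp := fun v => hqm_prob m n v
    have h2 := ae_one ρ
      (fun ω => qm m n (fun i : Fin n => ω (i : ℕ)) {μ : Measure S | IsProbabilityMeasure μ})
      (fun ω => prob_le_one) h.symm
    filter_upwards [h2] with ω hω
    exact (prob_compl_eq_zero_iff hms).2 hω
  have hisP : MeasurableSet {P : Measure (Measure S) | ∀ᵐ μ ∂P, IsProbabilityMeasure μ} :=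
    Measure.measurable_coe (measurableSet_isProb (X := S)).compl (measurableSet_singleton 0)
  have key : ∀ᵐ v ∂(ρ.map (fun (ω : ℕ → S) (i : Fin n) => ω (i : ℕ))),
      qm m n v = mixEmp m r (post n v) := by
    refine ae_eq_of_sets _ (qm m n) (fun v => mixEmp m r (post n v)) (hqm_meas m n) hmix_meas
      (hqm_prob m n) (fun v => ?_) ?_ ?_ ?_
    · have := hpost_prob n v
      exact isProb_mixEmp m _ r hr hrp
    · exact (ae_map_iff hξ.aemeasurable (hqm_meas m n hisP)).2 hqmP
    · refine Filter.Eventually.of_forall fun v => ?_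
      filter_upwards [ae_map_emp p hp m hm _] with μ hμ using hμ.1
    · intro A hA B hB
      have m1 : Measurable (fun v => qm m n v B) :=
        (Measure.measurable_coe hB).comp (hqm_meas m n)
      have m2 : Measurable (fun v => mixEmp m r (post n v) B) :=
        (Measure.measurable_coe hB).comp hmix_meas
      rw [setLIntegral_map hA m1 hξ, setLIntegral_map hA m2 hξ]
      have h1 := hqm m n A hA B hB
      have h2 := ident iid hiid ρ ptilde hptilde_meas hdirect r hr hrp hrae n (post n)
        (hpost_meas n) (hpost n) m A hA (emp m ⁻¹' B) (measurable_emp m hB)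
      simp only [empShift_eq] at h1
      refine h1.symm.trans (h2.trans ?_)
      refine lintegral_congr fun ω => ?_
      rw [mixEmp, Measure.map_apply (measurable_emp m) hB]
  have key2 := ae_of_ae_map hξ.aemeasurable key
  filter_upwards [key2, hpostWp] with ω h1 h2
  have hν := hphatWp n (fun i : Fin n => ω (i : ℕ))
  have hνp := hν.1
  have hPp := hpost_prob n (fun i : Fin n => ω (i : ℕ))
  rw [h1, iid_emp _ _ (hiid _ hνp).2 n m]
  exact det_ineq p hp m hm _ _ hν r hr hr1 hr2 h2


end
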